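/- arXiv:1802.06484 — 4 statements merged into one kernel-verified Lean document; each statement's English description precedes it below -/
import Mathlib

section
/- Let A and B be two disjoint finite sets in the plane, each of size k, with A ∪ B in general position, such that A and B are mutually avoiding. Then there exists a bijection f : A → B such that the k closed segments [a, f(a)], for a ∈ A, pairwise cross (any two of them have intersecting relative interiors and share no endpoint). -/
noncomputable section

abbrev Plane : Type := EuclideanSpace ℝ (Fin 2)

/-- A set of points in the plane is in general position if no three of its points
are collinear. -/
def GenPos2 (P : Set Plane) : Prop :=
  ∀ a ∈ P, ∀ b ∈ P, ∀ c ∈ P, a ≠ b → a ≠ c → b ≠ c →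
    ¬ Collinear ℝ ({a, b, c} : Set Plane)

/-- `A` avoids `B` if no line through two distinct points of `A` meets the convex
hull of `B`. -/
def Avoids2 (A B : Set Plane) : Prop :=
  ∀ a ∈ A, ∀ a' ∈ A, a ≠ a' →
    Disjoint ((affineSpan ℝ ({a, a'} : Set Plane) : AffineSubspace ℝ Plane) : Set Plane)
      (convexHull ℝ B)

def MutuallyAvoiding2 (A B : Set Plane) : Prop := Avoids2 A B ∧ Avoids2 B A

namespace CrossFam

def D (p q r : Plane) : ℝ := (q 0 - p 0) * (r 1 - p 1) - (q 1 - p 1) * (r 0 - p 0)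

lemma mem_line {a a' z : Plane} (h : a ≠ a') (hD : D a a' z = 0) :
    z ∈ affineSpan ℝ ({a, a'} : Set Plane) := by
  have key : ∃ t : ℝ, z 0 = a 0 + t * (a' 0 - a 0) ∧ z 1 = a 1 + t * (a' 1 - a 1) := by
    unfold D at hD
    by_cases h0 : a' 0 - a 0 = 0
    · have h1 : a' 1 - a 1 ≠ 0 := by
        intro h1
        apply h
        ext i
        fin_cases i
        · simp; linarith
        · simp; linarith
      refine ⟨(z 1 - a 1) / (a' 1 - a 1), ?_, ?_⟩
      · rw [h0] at hD ⊢
        have : (a' 1 - a 1) * (z 0 - a 0) = 0 := by linarith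
        rcases mul_eq_zero.1 this with h2 | h2
        · exact absurd h2 h1
        · linarith
      · field_simp; ring
    · refine ⟨(z 0 - a 0) / (a' 0 - a 0), ?_, ?_⟩
      · field_simp; ring
      · field_simp; linarith
  obtain ⟨t, h0, h1⟩ := key
  have hz : z = AffineMap.lineMap a a' t := by
    ext i
    fin_cases i
    · simp [AffineMap.lineMap_apply, h0]; ring
    · simp [AffineMap.lineMap_apply, h1]; ring
  rw [hz]
  exact AffineMap.lineMap_mem_affineSpan_pair t a a'

lemma avoid_ne {A B : Set Plane} (h : Avoids2 A B) {a a' z : Plane} (ha : a ∈ A) (ha' : a' ∈ A)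
    (hne : a ≠ a') (hz : z ∈ convexHull ℝ B) : D a a' z ≠ 0 := fun h0 =>
  Set.disjoint_left.1 (h a ha a' ha' hne) (mem_line hne h0) hz

lemma same_side {A B : Set Plane} (h : Avoids2 A B) {a a' b b' : Plane} (ha : a ∈ A) (ha' : a' ∈ A)
    (hne : a ≠ a') (hb : b ∈ B) (hb' : b' ∈ B) : 0 < D a a' b * D a a' b' := by
  by_contra hn
  have h1 := avoid_ne h ha ha' hne (subset_convexHull ℝ B hb)
  have h2 := avoid_ne h ha ha' hne (subset_convexHull ℝ B hb')
  have h3 : D a a' b * D a a' b' < 0 := lt_of_le_of_ne (not_lt.1 hn) (mul_ne_zero h1 h2)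
  obtain ⟨x, y, hx, hy, hxy, hs⟩ : ∃ x y : ℝ, 0 ≤ x ∧ 0 ≤ y ∧ x + y = 1 ∧
      x * D a a' b + y * D a a' b' = 0 := by
    generalize D a a' b = p at *
    generalize D a a' b' = q at *
    rcases mul_neg_iff.1 h3 with ⟨hp, hq⟩ | ⟨hp, hq⟩
    · have : 0 < p - q := by linarith
      exact ⟨-q / (p - q), p / (p - q), div_nonneg (by linarith) this.le,
        div_nonneg (by linarith) this.le, by field_simp; ring, by field_simp; ring⟩
    · have : 0 < q - p := by linarith
      exact ⟨q / (q - p), -p / (q - p), div_nonneg (by linarith) this.le,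
        div_nonneg (by linarith) this.le, by field_simp; ring, by field_simp; ring⟩
  refine avoid_ne h ha ha' hne (convex_convexHull ℝ B (subset_convexHull ℝ B hb)
    (subset_convexHull ℝ B hb') hx hy hxy) ?_
  rw [← hs]
  obtain rfl : y = 1 - x := by linarith
  simp [D]; ring

lemma exists_key {A B : Set Plane} (hAB : Avoids2 A B) (hBA : Avoids2 B A)
    {b b' : Plane} (hb : b ∈ B) (hb' : b' ∈ B) (hne : b ≠ b') :
    ∃ s : Plane → ℝ, Set.InjOn s A ∧
      ∀ a ∈ A, ∀ a' ∈ A, s a < s a' → ∀ c ∈ B, 0 < D a a' c := by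
  have hW : 0 < (b' 0 - b 0) ^ 2 + (b' 1 - b 1) ^ 2 := by
    by_contra hn
    apply hne
    ext i
    fin_cases i
    · simp; nlinarith [sq_nonneg (b' 0 - b 0), sq_nonneg (b' 1 - b 1)]
    · simp; nlinarith [sq_nonneg (b' 0 - b 0), sq_nonneg (b' 1 - b 1)]
  let N : Plane → ℝ := fun a => (a 0 - b 0) * (b' 0 - b 0) + (a 1 - b 1) * (b' 1 - b 1)
  have hD : ∀ a ∈ A, D b b' a ≠ 0 := fun a ha =>
    avoid_ne hBA hb hb' hne (subset_convexHull ℝ A ha)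
  have hid : ∀ a a', N a * D b b' a' - N a' * D b b' a =
      D a a' b * ((b' 0 - b 0) ^ 2 + (b' 1 - b 1) ^ 2) := by
    intro a a'; simp only [N, D]; ring
  have hs : ∀ a ∈ A, ∀ a' ∈ A, N a / D b b' a - N a' / D b b' a' =
      D a a' b * (((b' 0 - b 0) ^ 2 + (b' 1 - b 1) ^ 2) / (D b b' a * D b b' a')) := by
    intro a ha a' ha'
    have := hD a ha
    have := hD a' ha'
    rw [← mul_div_assoc, ← hid, div_sub_div _ _ (hD a ha) (hD a' ha')]
    ring
  have hpos : ∀ a ∈ A, ∀ a' ∈ A,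
      0 < ((b' 0 - b 0) ^ 2 + (b' 1 - b 1) ^ 2) / (D b b' a * D b b' a') :=
    fun a ha a' ha' => div_pos hW (same_side hBA hb hb' hne ha ha')
  refine ⟨fun a => - (N a / D b b' a), ?_, ?_⟩
  · intro a ha a' ha' h
    by_contra hn
    have h1 := hs a ha a' ha'
    have h2 : N a / D b b' a - N a' / D b b' a' = 0 := by
      have : - (N a / D b b' a) = - (N a' / D b b' a') := h
      linarith
    rw [h2] at h1
    exact mul_ne_zero (avoid_ne hAB ha ha' hn (subset_convexHull ℝ B hb))
      (hpos a ha a' ha').ne' h1.symm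
  · intro a ha a' ha' h c hc
    have hn : a ≠ a' := by rintro rfl; exact lt_irrefl _ h
    have h1 := hs a ha a' ha'
    have h2 : 0 < N a / D b b' a - N a' / D b b' a' := by
      have : - (N a / D b b' a) < - (N a' / D b b' a') := h
      linarith
    rw [h1] at h2
    have h3 := pos_of_mul_pos_left h2 (hpos a ha a' ha').le
    exact pos_of_mul_pos_right (same_side hAB ha ha' hn hb hc) h3.le

lemma cross {a a' b b' : Plane} (h1 : 0 < D a a' b) (h2 : 0 < D a a' b') (h3 : 0 < D b b' a)
    (h4 : 0 < D b b' a') : (openSegment ℝ a b ∩ openSegment ℝ a' b').Nonempty := by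
  set S := D b b' a' + D a a' b' with hS
  have hS' : S = D b b' a + D a a' b := by simp only [hS, D]; ring
  have hp : 0 < S := by linarith
  refine ⟨(D b b' a' / S) • a + (D a a' b' / S) • b,
    ⟨_, _, div_pos h4 hp, div_pos h2 hp, by rw [← add_div, ← hS, div_self hp.ne'], rfl⟩,
    ⟨D b b' a / S, D a a' b / S, div_pos h3 hp, div_pos h1 hp,
      by rw [← add_div, ← hS', div_self hp.ne'], ?_⟩⟩
  ext i
  fin_cases i
  · simp; field_simp; simp only [D]; ring
  · simp; field_simp; simp only [D]; ring

lemma exists_mono {A B : Finset Plane} (hc : A.card = B.card) {s t : Plane → ℝ}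
    (hs : Set.InjOn s A) (ht : Set.InjOn t B) :
    ∃ f : Plane → Plane, Set.BijOn f (A : Set Plane) (B : Set Plane) ∧
      ∀ a ∈ A, ∀ a' ∈ A, s a < s a' → t (f a) < t (f a') := by
  classical
  have hA : (A.image s).card = A.card := Finset.card_image_of_injOn hs
  have hB : (B.image t).card = A.card := by rw [Finset.card_image_of_injOn ht, hc]
  let e := ((A.image s).orderIsoOfFin hA).symm.trans ((B.image t).orderIsoOfFin hB)
  have hex : ∀ a, ∃ b, ∀ ha : a ∈ A,
      b ∈ B ∧ t b = (e ⟨s a, Finset.mem_image_of_mem s ha⟩ : ℝ) := by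
    intro a
    by_cases ha : a ∈ A
    · obtain ⟨b, hb, h⟩ := Finset.mem_image.1 (e ⟨s a, Finset.mem_image_of_mem s ha⟩).2
      exact ⟨b, fun _ => ⟨hb, h⟩⟩
    · exact ⟨a, fun h => absurd h ha⟩
  choose f hf using hex
  have hmono : ∀ a ∈ A, ∀ a' ∈ A, s a < s a' → t (f a) < t (f a') := by
    intro a ha a' ha' h
    rw [(hf a ha).2, (hf a' ha').2]
    exact e.strictMono (show (⟨s a, _⟩ : {x // x ∈ A.image s}) < ⟨s a', _⟩ from h)
  have hmaps : Set.MapsTo f (A : Set Plane) (B : Set Plane) := fun a ha => (hf a ha).1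
  have hinj : Set.InjOn f (A : Set Plane) := by
    intro a ha a' ha' h
    apply hs ha ha'
    rcases lt_trichotomy (s a) (s a') with h1 | h1 | h1
    · exact absurd (hmono a ha a' ha' h1) (by rw [h]; exact lt_irrefl _)
    · exact h1
    · exact absurd (hmono a' ha' a ha h1) (by rw [h]; exact lt_irrefl _)
  exact ⟨f, ⟨hmaps, hinj, Finset.surjOn_of_injOn_of_card_le f hmaps hinj hc.ge⟩, hmono⟩

lemma exists_good {A B : Finset Plane} (hc : A.card = B.card)
    (hAB : Avoids2 (A : Set Plane) (B : Set Plane))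
    (hBA : Avoids2 (B : Set Plane) (A : Set Plane)) :
    ∃ f : Plane → Plane, Set.BijOn f (A : Set Plane) (B : Set Plane) ∧
      ∀ a ∈ A, ∀ a' ∈ A, a ≠ a' →
        (openSegment ℝ a (f a) ∩ openSegment ℝ a' (f a')).Nonempty := by
  by_cases h2 : 1 < A.card
  · obtain ⟨a, ha, a', ha', hna⟩ := Finset.one_lt_card.1 h2
    obtain ⟨b, hb, b', hb', hnb⟩ := Finset.one_lt_card.1 (hc ▸ h2)
    obtain ⟨s, hs, hs'⟩ := exists_key hAB hBA hb hb' hnb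
    obtain ⟨t, ht, ht'⟩ := exists_key hBA hAB ha ha' hna
    obtain ⟨f, hf, hm⟩ := exists_mono hc hs ht
    have main : ∀ a ∈ A, ∀ a' ∈ A, s a < s a' →
        (openSegment ℝ a (f a) ∩ openSegment ℝ a' (f a')).Nonempty := by
      intro a ha a' ha' h
      have m := hf.mapsTo ha
      have m' := hf.mapsTo ha'
      have hl := hm a ha a' ha' h
      exact cross (hs' a ha a' ha' h _ m) (hs' a ha a' ha' h _ m')
        (ht' _ m _ m' hl a ha) (ht' _ m _ m' hl a' ha')
    refine ⟨f, hf, fun a ha a' ha' hn => ?_⟩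
    rcases lt_or_gt_of_ne (fun h => hn (hs ha ha' h) : s a ≠ s a') with h | h
    · exact main a ha a' ha' h
    · rw [Set.inter_comm]; exact main a' ha' a ha h
  · have hsub := Finset.card_le_one.1 (not_lt.1 h2)
    have hsubB := Finset.card_le_one.1 (hc ▸ not_lt.1 h2)
    obtain ⟨f, hf, -⟩ := exists_mono (s := fun _ => 0) (t := fun _ => 0) hc
      (fun a ha a' ha' _ => hsub a ha a' ha') (fun a ha a' ha' _ => hsubB a ha a' ha')
    exact ⟨f, hf, fun a ha a' ha' hn => absurd (hsub a ha a' ha') hn⟩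

end CrossFam

/-- Two disjoint mutually avoiding sets of size `k` each, with union in general
position, yield a perfect matching between them whose `k` segments pairwise cross. -/
theorem mutually_avoiding_gives_crossing_family (k : ℕ) (A B : Finset Plane)
    (hA : A.card = k) (hB : B.card = k) (hdisj : Disjoint A B)
    (hgp : GenPos2 ((A : Set Plane) ∪ (B : Set Plane)))
    (hav : MutuallyAvoiding2 (A : Set Plane) (B : Set Plane)) :
    ∃ f : Plane → Plane, Set.BijOn f (A : Set Plane) (B : Set Plane) ∧
      ∀ a ∈ A, ∀ a' ∈ A, a ≠ a' →
        (openSegment ℝ a (f a) ∩ openSegment ℝ a' (f a')).Nonempty ∧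
        ({a, f a} : Set Plane) ∩ {a', f a'} = ∅ := by
  obtain ⟨f, hf, hX⟩ := CrossFam.exists_good (hA.trans hB.symm) hav.1 hav.2
  refine ⟨f, hf, fun a ha a' ha' hn => ⟨hX a ha a' ha' hn, ?_⟩⟩
  have m : f a ∈ B := hf.mapsTo ha
  have m' : f a' ∈ B := hf.mapsTo ha'
  have hd := Finset.disjoint_left.1 hdisj
  have hff : f a ≠ f a' := fun h => hn (hf.injOn ha ha' h)
  ext x
  simp only [Set.mem_inter_iff, Set.mem_insert_iff, Set.mem_singleton_iff,
    Set.mem_empty_iff_false, iff_false]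
  rintro ⟨rfl | rfl, h | h⟩
  · exact hn h
  · exact hd ha (h ▸ m')
  · exact hd ha' (h ▸ m)
  · exact hff h
end
end

section
/- For every integer k ≥ 1 and every set P of n points in the plane in general position with n > 12(40k+1)², there exist pairwise disjoint subsets A₁, …, A_k, B₁, …, B_k ⊆ P, each of size at least n/(1320k)⁴, such that for every choice of points a₁ ∈ A₁, …, a_k ∈ A_k and b₁ ∈ B₁, …, b_k ∈ B_k, the sets {a₁, …, a_k} and {b₁, …, b_k} are mutually avoiding. -/
noncomputable section

theorem fma_rank {α : Type*} (G : α → ℝ) (P : Finset α) :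
    ∃ r : α → ℕ, Set.InjOn r P ∧ (∀ a ∈ P, r a < P.card) ∧
      ∀ a ∈ P, ∀ b ∈ P, r a ≤ r b → G a ≤ G b := by
  classical
  induction P using Finset.induction_on_max_value G with
  | empty => exact ⟨fun _ => 0, by simp⟩
  | insert a s ha hmax ih =>
    obtain ⟨r, h1, h2, h3⟩ := ih
    have hne : ∀ b ∈ s, b ≠ a := fun b hb h => ha (h ▸ hb)
    refine ⟨Function.update r a s.card, ?_, ?_, ?_⟩
    · intro b hb c hc hbc
      simp only [Finset.coe_insert, Set.mem_insert_iff, Finset.mem_coe] at hb hc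
      rcases hb with rfl | hb <;> rcases hc with rfl | hc
      · rfl
      · have := h2 c hc
        simp [Function.update_of_ne (hne c hc)] at hbc; omega
      · have := h2 b hb
        simp [Function.update_of_ne (hne b hb)] at hbc; omega
      · simp only [Function.update_of_ne (hne b hb), Function.update_of_ne (hne c hc)] at hbc
        exact h1 hb hc hbc
    · intro b hb
      rw [Finset.card_insert_of_notMem ha]
      rcases Finset.mem_insert.1 hb with rfl | hb
      · simp
      · rw [Function.update_of_ne (hne b hb)]; have := h2 b hb; omega
    · intro b hb c hc hbc
      rcases Finset.mem_insert.1 hb with rfl | hb <;> rcases Finset.mem_insert.1 hc with rfl | hc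
      · exact le_rfl
      · have := h2 c hc
        simp [Function.update_of_ne (hne c hc)] at hbc; omega
      · exact hmax b (by assumption)
      · simp only [Function.update_of_ne (hne b hb), Function.update_of_ne (hne c hc)] at hbc
        exact h3 b hb c hc hbc

theorem fma_quant {α : Type*} (r : ℕ) (hr : 1 ≤ r) (S : Finset α) (hS : S.Nonempty) (g : α → ℝ) :
    ∃ v, S.card ≤ r * (S.filter (fun a => g a ≤ v)).card ∧
      r * (S.filter (fun a => g a < v)).card < S.card := by
  classical
  set V := (S.image g).filter (fun v => S.card ≤ r * (S.filter (fun a => g a ≤ v)).card) with hV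
  have hVne : V.Nonempty := by
    obtain ⟨a, ha, hmax⟩ := S.exists_max_image g hS
    refine ⟨g a, ?_⟩
    rw [hV, Finset.mem_filter]
    refine ⟨Finset.mem_image_of_mem _ ha, ?_⟩
    rw [Finset.filter_true_of_mem hmax]
    nlinarith [S.card.zero_le]
  obtain ⟨v, hv, hmin⟩ := V.exists_min_image id hVne
  have hv2 := (Finset.mem_filter.1 hv).2
  refine ⟨v, hv2, ?_⟩
  by_contra hcon
  push Not at hcon
  have hne : (S.filter (fun a => g a < v)).Nonempty := by
    rw [Finset.nonempty_iff_ne_empty]; intro h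
    rw [h] at hcon; simp at hcon; simp [hcon] at hS
  obtain ⟨b, hb, hbmax⟩ := Finset.exists_max_image _ g hne
  rw [Finset.mem_filter] at hb
  have : g b ∈ V := by
    rw [hV, Finset.mem_filter]
    refine ⟨Finset.mem_image_of_mem _ hb.1, hcon.trans ?_⟩
    gcongr r * ?_
    apply Finset.card_le_card
    intro a ha
    have h1 := hbmax a ha
    simp only [Finset.mem_filter] at ha ⊢
    exact ⟨ha.1, h1⟩
  have := hmin _ this
  simp only [id] at this
  linarith [hb.2]

/-- Erdős–Szekeres for point sets in a grid. -/
theorem fma_ES (q : ℕ) : ∀ (p : ℕ) (C : Finset (ℕ × ℕ)), Set.InjOn Prod.fst (C : Set (ℕ × ℕ)) →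
    Set.InjOn Prod.snd (C : Set (ℕ × ℕ)) → p * q < C.card →
    (∃ D ⊆ C, D.card = p + 1 ∧ ∀ a ∈ D, ∀ b ∈ D, a.1 < b.1 → a.2 < b.2) ∨
    (∃ D ⊆ C, D.card = q + 1 ∧ ∀ a ∈ D, ∀ b ∈ D, a.1 < b.1 → b.2 < a.2) := by
  classical
  intro p
  induction p with
  | zero =>
    intro C h1 h2 h
    obtain ⟨a, ha⟩ := Finset.card_pos.1 (by omega : 0 < C.card)
    left
    exact ⟨{a}, by simpa using ha, by simp, by simp⟩
  | succ p ih =>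
    intro C h1 h2 h
    set M := C.filter (fun a => ∀ b ∈ C, ¬ (b.1 < a.1 ∧ b.2 < a.2)) with hM
    have hMC : M ⊆ C := Finset.filter_subset _ _
    by_cases hc : q + 1 ≤ M.card
    · right
      obtain ⟨D, hD, hDc⟩ := Finset.exists_subset_card_eq hc
      refine ⟨D, hD.trans hMC, hDc, ?_⟩
      intro a ha b hb hab
      have hb' := (Finset.mem_filter.1 (hD hb)).2 a (hMC (hD ha))
      by_contra hlt
      rcases Nat.lt_or_ge a.2 b.2 with h' | h'
      · exact hb' ⟨hab, h'⟩
      · have : a = b := h2 (hMC (hD ha)) (hMC (hD hb)) (by omega)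
        subst this; omega
    · have hcard : p * q < (C \ M).card := by
        rw [Finset.card_sdiff_of_subset hMC]
        have : (p + 1) * q = p * q + q := by ring
        omega
      have hs : C \ M ⊆ C := Finset.sdiff_subset
      rcases ih (C \ M) (h1.mono (by exact_mod_cast hs)) (h2.mono (by exact_mod_cast hs)) hcard with
        ⟨D, hD, hDc, hDm⟩ | ⟨D, hD, hDc, hDm⟩
      · left
        obtain ⟨d, hd, hdmin⟩ := D.exists_min_image Prod.fst (Finset.card_pos.1 (by omega))
        have hdC := Finset.mem_sdiff.1 (hD hd)
        have : ∃ b ∈ C, b.1 < d.1 ∧ b.2 < d.2 := by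
          by_contra hcon
          push Not at hcon
          apply hdC.2
          rw [hM, Finset.mem_filter]
          refine ⟨hdC.1, fun b hb hbb => ?_⟩
          have := hcon b hb hbb.1; omega
        obtain ⟨b, hb, hb1, hb2⟩ := this
        have hbD : b ∉ D := fun h => by have := hdmin b h; omega
        refine ⟨insert b D, ?_, ?_, ?_⟩
        · intro z hz
          rcases Finset.mem_insert.1 hz with rfl | hz
          · exact hb
          · exact hs (hD hz)
        · rw [Finset.card_insert_of_notMem hbD, hDc]
        · have key : ∀ z ∈ D, d.2 ≤ z.2 := by
            intro z hz
            rcases (hdmin z hz).lt_or_eq with h' | h'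
            · exact (hDm d hd z hz h').le
            · have : d = z := h1 (hs (hD hd)) (hs (hD hz)) h'
              rw [this]
          intro z hz z' hz' hzz
          rcases Finset.mem_insert.1 hz with e | e <;>
            rcases Finset.mem_insert.1 hz' with e' | e'
          · subst e; subst e'; omega
          · subst e; have := key z' e'; omega
          · subst e'; have := hdmin z e; omega
          · exact hDm z e z' e' hzz
      · right
        exact ⟨D, hD.trans hs, hDc, hDm⟩

theorem fma_frac {α : Type*} (k t : ℕ) (hk : 1 ≤ k) (ht : 1 ≤ t) (T : Finset α) (x G : α → ℝ)
    (hm : 75 * k ^ 2 ≤ T.card) (hmt : 1000 * k ^ 4 * (t - 1) ≤ T.card) :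
    ∃ A : Fin k → Finset α, (∀ i, A i ⊆ T) ∧ (∀ i j, i ≠ j → Disjoint (A i) (A j)) ∧
      (∀ i, t ≤ (A i).card) ∧
      ((∀ i j, i ≠ j → ∀ a ∈ A i, ∀ b ∈ A j, x a < x b → G a ≤ G b) ∨
       (∀ i j, i ≠ j → ∀ a ∈ A i, ∀ b ∈ A j, x a < x b → G b ≤ G a)) := by
  classical
  obtain ⟨r, r1, r2, r3⟩ := fma_rank x T
  obtain ⟨s, s1, s2, s3⟩ := fma_rank G T
  set m := T.card with hmdef
  set w := m / (4 * k ^ 2) with hw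
  have hk2 : 1 ≤ k ^ 2 := Nat.one_le_pow _ _ hk
  have hw2 : 2 ≤ w := by
    rw [hw, Nat.le_div_iff_mul_le (by omega)]; omega
  have hwm : w * (4 * k ^ 2) ≤ m := Nat.div_mul_le_self _ _
  have hmw : m < (6 * k ^ 2) * w := by
    have : m < (4 * k ^ 2) * (w + 1) := Nat.lt_mul_div_succ m (by omega)
    nlinarith
  -- cells
  let cell : ℕ × ℕ → Finset α := fun c => T.filter (fun a => r a / w = c.1 ∧ s a / w = c.2)
  have blk : ∀ (u : α → ℕ), Set.InjOn u T → ∀ c, (T.filter (fun a => u a / w = c)).card ≤ w := by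
    intro u hu c
    calc (T.filter (fun a => u a / w = c)).card ≤ (Finset.Ico (c * w) (c * w + w)).card := by
          apply Finset.card_le_card_of_injOn u
          · intro a ha
            simp only [Finset.coe_filter, Set.mem_ofPred_eq] at ha
            have h0 := Nat.div_add_mod (u a) w
            have h1 := Nat.mod_lt (u a) (by omega : 0 < w)
            rw [ha.2, mul_comm] at h0
            simp only [Finset.coe_Ico, Set.mem_Ico]; omega
          · exact hu.mono (by exact_mod_cast Finset.filter_subset _ _)
      _ = w := by simp
  have greedy : ∀ j ≤ k ^ 2, ∃ D : Finset (ℕ × ℕ), D.card = j ∧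
      Set.InjOn Prod.fst (D : Set (ℕ × ℕ)) ∧ Set.InjOn Prod.snd (D : Set (ℕ × ℕ)) ∧
      ∀ c ∈ D, t ≤ (cell c).card := by
    intro j
    induction j with
    | zero => intro _; exact ⟨∅, by simp⟩
    | succ j ih =>
      intro hj
      obtain ⟨D, hD, hf, hs, hD4⟩ := ih (by omega)
      have : ∃ c : ℕ × ℕ, t ≤ (cell c).card ∧ (∀ d ∈ D, d.1 ≠ c.1) ∧ (∀ d ∈ D, d.2 ≠ c.2) := by
        by_contra hcon
        push Not at hcon
        set R := (Finset.range (6 * k ^ 2)) ×ˢ (Finset.range (6 * k ^ 2)) with hR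
        have hsub : T ⊆ (D.biUnion (fun d => T.filter (fun a => r a / w = d.1))) ∪
            (D.biUnion (fun d => T.filter (fun a => s a / w = d.2))) ∪
            ((R.filter (fun c => (cell c).card ≤ t - 1)).biUnion cell) := by
          intro a ha
          simp only [Finset.mem_union, Finset.mem_biUnion, Finset.mem_filter]
          by_cases h1 : ∃ d ∈ D, r a / w = d.1
          · left; left; obtain ⟨d, hd, h⟩ := h1; exact ⟨d, hd, ha, h⟩
          by_cases h2 : ∃ d ∈ D, s a / w = d.2
          · left; right; obtain ⟨d, hd, h⟩ := h2; exact ⟨d, hd, ha, h⟩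
          right
          push Not at h1 h2
          refine ⟨(r a / w, s a / w), ⟨?_, ?_⟩, ?_⟩
          · simp only [hR, Finset.mem_product, Finset.mem_range]
            constructor
            · rw [Nat.div_lt_iff_lt_mul (by omega)]; have := r2 a ha; omega
            · rw [Nat.div_lt_iff_lt_mul (by omega)]; have := s2 a ha; omega
          · by_contra hh
            obtain ⟨d, hd, h⟩ := hcon (r a / w, s a / w) (by omega) (fun d hd h => h1 d hd h.symm)
            exact h2 d hd h.symm
          · simp only [cell, Finset.mem_filter]; simp [ha]
        have hc := Finset.card_le_card hsub
        have e1 := Finset.card_biUnion_le_card_mul D (fun d => T.filter (fun a => r a / w = d.1)) w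
          (fun d _ => blk r r1 d.1)
        have e2 := Finset.card_biUnion_le_card_mul D (fun d => T.filter (fun a => s a / w = d.2)) w
          (fun d _ => blk s s1 d.2)
        have e3 := Finset.card_biUnion_le_card_mul (R.filter (fun c => (cell c).card ≤ t - 1)) cell
          (t - 1) (fun c hc => (Finset.mem_filter.1 hc).2)
        have e4 : (R.filter (fun c => (cell c).card ≤ t - 1)).card ≤ 36 * k ^ 4 := by
          refine (Finset.card_filter_le _ _).trans ?_
          rw [hR, Finset.card_product, Finset.card_range]; apply le_of_eq; ring
        have e5 := (Finset.card_union_le _ _).trans' hc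
        have e6 := Finset.card_union_le (D.biUnion (fun d => T.filter (fun a => r a / w = d.1)))
            (D.biUnion (fun d => T.filter (fun a => s a / w = d.2)))
        have e7 : (R.filter (fun c => (cell c).card ≤ t - 1)).card * (t - 1)
            ≤ 36 * k ^ 4 * (t - 1) := Nat.mul_le_mul_right _ e4
        have e8 : D.card * w ≤ k ^ 2 * w := Nat.mul_le_mul_right _ (by omega)
        have e9 : 1000 * k ^ 4 * (t - 1) = 1000 * (k ^ 4 * (t - 1)) := by ring
        have e10 : 36 * k ^ 4 * (t - 1) = 36 * (k ^ 4 * (t - 1)) := by ring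
        have e11 : w * (4 * k ^ 2) = 4 * (k ^ 2 * w) := by ring
        omega
      obtain ⟨c, hc, hc1, hc2⟩ := this
      have hcD : c ∉ D := fun h => hc1 c h rfl
      refine ⟨insert c D, by rw [Finset.card_insert_of_notMem hcD, hD], ?_, ?_, ?_⟩
      · rw [Finset.coe_insert, Set.injOn_insert (by simpa using hcD)]
        refine ⟨hf, ?_⟩
        rintro ⟨d, hd, h⟩; exact hc1 d hd h
      · rw [Finset.coe_insert, Set.injOn_insert (by simpa using hcD)]
        refine ⟨hs, ?_⟩
        rintro ⟨d, hd, h⟩; exact hc2 d hd h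
      · intro d hd
        rcases Finset.mem_insert.1 hd with rfl | hd
        · exact hc
        · exact hD4 d hd
  obtain ⟨C, hC, hf, hs, hC4⟩ := greedy _ le_rfl
  have hkk : (k - 1) * (k - 1) < C.card := by
    rw [hC]
    obtain ⟨l, rfl⟩ : ∃ l, k = l + 1 := ⟨k - 1, by omega⟩
    simp only [Nat.add_sub_cancel]; nlinarith
  have divlt : ∀ (u v : ℕ), u / w < v / w → u ≤ v := by
    intro u v h
    by_contra h'
    have := Nat.div_le_div_right (c := w) (by omega : v ≤ u)
    omega
  have hES := fma_ES (k - 1) (k - 1) C hf hs hkk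
  rw [Nat.sub_add_cancel hk] at hES
  have enum : ∀ D ⊆ C, D.card = k → ∃ e : Fin k → ℕ × ℕ, (∀ i, e i ∈ D) ∧ Function.Injective e := by
    intro D _ hDk
    refine ⟨fun i => (D.equivFinOfCardEq hDk).symm i, fun i => by simp, ?_⟩
    intro i j hij
    exact (D.equivFinOfCardEq hDk).symm.injective (Subtype.ext hij)
  have fin : ∀ D ⊆ C, D.card = k → ∃ e : Fin k → ℕ × ℕ, (∀ i, e i ∈ D) ∧
      (∀ i, cell (e i) ⊆ T) ∧ (∀ i j, i ≠ j → Disjoint (cell (e i)) (cell (e j))) ∧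
      (∀ i, t ≤ (cell (e i)).card) ∧
      (∀ i j, i ≠ j → ∀ a ∈ cell (e i), ∀ b ∈ cell (e j), x a < x b → (e i).1 < (e j).1) := by
    intro D hDC hDk
    obtain ⟨e, he, hinj⟩ := enum D hDC hDk
    have hne : ∀ i j, i ≠ j → (e i).1 ≠ (e j).1 := by
      intro i j hij h
      exact hij (hinj (hf (hDC (he i)) (hDC (he j)) h))
    refine ⟨e, he, fun i => Finset.filter_subset _ _, ?_, fun i => hC4 _ (hDC (he i)), ?_⟩
    · intro i j hij
      rw [Finset.disjoint_left]
      intro a ha hb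
      simp only [cell, Finset.mem_filter] at ha hb
      exact hne i j hij (ha.2.1.symm.trans hb.2.1)
    · intro i j hij a ha b hb hab
      simp only [cell, Finset.mem_filter] at ha hb
      by_contra hlt
      have h1 : (e j).1 < (e i).1 := by have := hne i j hij; omega
      rw [← ha.2.1, ← hb.2.1] at h1
      have := r3 b hb.1 a ha.1 (divlt _ _ h1)
      linarith
  rcases hES with ⟨D, hD, hDk, hmono⟩ | ⟨D, hD, hDk, hmono⟩
  · obtain ⟨e, he, h1, h2, h3, h4⟩ := fin D hD hDk
    refine ⟨fun i => cell (e i), h1, h2, h3, Or.inl ?_⟩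
    intro i j hij a ha b hb hab
    have h5 := hmono _ (he i) _ (he j) (h4 i j hij a ha b hb hab)
    simp only [cell, Finset.mem_filter] at ha hb
    rw [← ha.2.2, ← hb.2.2] at h5
    exact s3 a ha.1 b hb.1 (divlt _ _ h5)
  · obtain ⟨e, he, h1, h2, h3, h4⟩ := fin D hD hDk
    refine ⟨fun i => cell (e i), h1, h2, h3, Or.inr ?_⟩
    intro i j hij a ha b hb hab
    have h5 := hmono _ (he i) _ (he j) (h4 i j hij a ha b hb hab)
    simp only [cell, Finset.mem_filter] at ha hb
    rw [← ha.2.2, ← hb.2.2] at h5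
    exact s3 b hb.1 a ha.1 (divlt _ _ h5)

/-- slope -/
def fmaSl {α : Type*} (x y : α → ℝ) (a b : α) : ℝ := (y b - y a) / (x b - x a)

/-- on `X`, a cut of directions between `Y` and `Z` -/
def FmaCut {α : Type*} (x y : α → ℝ) (X Y Z : Finset α) : Prop :=
  ∃ c G : α → ℝ, (∀ a ∈ X, ∀ b ∈ X, x a < x b →
      (G a ≤ G b → fmaSl x y a b ≤ c a) ∧ (G b ≤ G a → c a ≤ fmaSl x y a b)) ∧
    ∀ a ∈ X, (∀ z ∈ Y, fmaSl x y a z < c a) ∧ (∀ z ∈ Z, c a < fmaSl x y a z)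

def FmaLt {α : Type*} (x : α → ℝ) (X Y : Finset α) : Prop := ∀ a ∈ X, ∀ b ∈ Y, x a < x b

/-- middle set strictly below a line, the others strictly above -/
def FmaSep {α : Type*} (x y : α → ℝ) (X Y Z : Finset α) : Prop :=
  ∃ l c : ℝ, (∀ a ∈ X, l * x a + c < y a) ∧ (∀ a ∈ Y, y a < l * x a + c) ∧
    (∀ a ∈ Z, l * x a + c < y a)

theorem fma_between {α : Type*} (x : α → ℝ) (X Y : Finset α) (hX : X.Nonempty) (hY : Y.Nonempty)
    (h : FmaLt x X Y) : ∃ v, (∀ a ∈ X, x a < v) ∧ (∀ b ∈ Y, v < x b) := by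
  obtain ⟨a, ha, hmax⟩ := X.exists_max_image x hX
  obtain ⟨b, hb, hmin⟩ := Y.exists_min_image x hY
  have := h a ha b hb
  refine ⟨(x a + x b) / 2, fun a' ha' => ?_, fun b' hb' => ?_⟩
  · have := hmax a' ha'; linarith
  · have := hmin b' hb'; linarith

theorem fma_cut_neg {α : Type*} {x y : α → ℝ} {X Y Z : Finset α}
    (h : FmaCut x (fun a => - y a) X Y Z) : FmaCut x y X Z Y := by
  obtain ⟨c, G, h1, h2⟩ := h
  have e : ∀ a b, fmaSl x (fun a => - y a) a b = - fmaSl x y a b := by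
    intro a b; unfold fmaSl; rw [← neg_div]; congr 1; ring
  simp only [e] at h1 h2
  refine ⟨fun a => - c a, fun a => - G a, ?_, ?_⟩
  · intro a ha b hb hab
    have := h1 a ha b hb hab
    constructor
    · intro h; have := this.2 (by linarith); linarith
    · intro h; have := this.1 (by linarith); linarith
  · intro a ha
    have := h2 a ha
    constructor
    · intro z hz; have := this.2 z hz; linarith
    · intro z hz; have := this.1 z hz; linarith

theorem fma_cut_mid {α : Type*} {x y : α → ℝ} {X Y Z : Finset α}
    (h1 : FmaLt x X Y) (h2 : FmaLt x Y Z) (h : FmaSep x y X Y Z) : FmaCut x y Y X Z := by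
  obtain ⟨l, c, hX, hY, hZ⟩ := h
  refine ⟨fun _ => l, fun a => - (y a - l * x a), ?_, ?_⟩
  · intro a ha b hb hab
    have hp : 0 < x b - x a := by linarith
    constructor
    · intro h; unfold fmaSl; rw [div_le_iff₀ hp]; nlinarith
    · intro h; unfold fmaSl; rw [le_div_iff₀ hp]; nlinarith
  · intro a ha
    have := hY a ha
    constructor
    · intro z hz
      have hp : x z - x a < 0 := by linarith [h1 z hz a ha]
      have := hX z hz
      unfold fmaSl; rw [div_lt_iff_of_neg hp]; nlinarith
    · intro z hz
      have hp : 0 < x z - x a := by linarith [h2 a ha z hz]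
      have := hZ z hz
      unfold fmaSl; rw [lt_div_iff₀ hp]; nlinarith

theorem fma_cut_left {α : Type*} {x y : α → ℝ} {X Y Z : Finset α} (hY : Y.Nonempty)
    (hZ : Z.Nonempty)
    (h1 : FmaLt x X Y) (h2 : FmaLt x Y Z) (h : FmaSep x y X Y Z) : FmaCut x y X Y Z := by
  obtain ⟨l, c, hX, hY', hZ'⟩ := h
  obtain ⟨v, hv1, hv2⟩ := fma_between x Y Z hY hZ h2
  have hXv : ∀ a ∈ X, x a < v := by
    intro a ha
    obtain ⟨b, hb⟩ := hY
    exact (h1 a ha b hb).trans (hv1 b hb)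
  refine ⟨fun a => (l * v + c - y a) / (v - x a), fun a => (l * v + c - y a) / (v - x a), ?_, ?_⟩
  · intro a ha b hb hab
    have hp : 0 < x b - x a := by linarith
    have ha' : 0 < v - x a := by linarith [hXv a ha]
    have hb' : 0 < v - x b := by linarith [hXv b hb]
    constructor
    · intro h; rw [div_le_div_iff₀ ha' hb'] at h
      unfold fmaSl; rw [div_le_div_iff₀ hp ha']; nlinarith
    · intro h; rw [div_le_div_iff₀ hb' ha'] at h
      unfold fmaSl; rw [div_le_div_iff₀ ha' hp]; nlinarith
  · intro a ha
    have hxa := hX a ha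
    have ha' : 0 < v - x a := by linarith [hXv a ha]
    constructor
    · intro z hz
      have hp : 0 < x z - x a := by linarith [h1 a ha z hz]
      have hz1 := hY' z hz
      have hz2 := hv1 z hz
      unfold fmaSl; rw [div_lt_div_iff₀ hp ha']
      nlinarith [mul_pos (sub_pos.2 hxa) (sub_pos.2 hz2), mul_pos (sub_pos.2 hz1) ha']
    · intro z hz
      have hz2 := hv2 z hz
      have hp : 0 < x z - x a := by linarith
      have hz1 := hZ' z hz
      unfold fmaSl; rw [div_lt_div_iff₀ ha' hp]
      nlinarith [mul_pos (sub_pos.2 hxa) (sub_pos.2 hz2), mul_pos (sub_pos.2 hz1) ha']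

theorem fma_cut_right {α : Type*} {x y : α → ℝ} {X Y Z : Finset α} (hX : X.Nonempty)
    (hY : Y.Nonempty)
    (h1 : FmaLt x X Y) (h2 : FmaLt x Y Z) (h : FmaSep x y X Y Z) : FmaCut x y Z X Y := by
  obtain ⟨l, c, hX', hY', hZ'⟩ := h
  obtain ⟨v, hv1, hv2⟩ := fma_between x X Y hX hY h1
  have hZv : ∀ a ∈ Z, v < x a := by
    intro a ha
    obtain ⟨b, hb⟩ := hY
    exact (hv2 b hb).trans (h2 b hb a ha)
  refine ⟨fun a => (y a - (l * v + c)) / (x a - v), fun a => - ((y a - (l * v + c)) / (x a - v)),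
    ?_, ?_⟩
  · intro a ha b hb hab
    have hp : 0 < x b - x a := by linarith
    have ha' : 0 < x a - v := by linarith [hZv a ha]
    have hb' : 0 < x b - v := by linarith [hZv b hb]
    constructor
    · intro h; rw [neg_le_neg_iff, div_le_div_iff₀ hb' ha'] at h
      unfold fmaSl; rw [div_le_div_iff₀ hp ha']; nlinarith
    · intro h; rw [neg_le_neg_iff, div_le_div_iff₀ ha' hb'] at h
      unfold fmaSl; rw [div_le_div_iff₀ ha' hp]; nlinarith
  · intro a ha
    have hxa := hZ' a ha
    have ha' : 0 < x a - v := by linarith [hZv a ha]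
    have e : ∀ z, fmaSl x y a z = (y a - y z) / (x a - x z) := by
      intro z; unfold fmaSl; rw [← neg_div_neg_eq]; congr 1 <;> ring
    constructor
    · intro z hz
      have hz2 := hv1 z hz
      have hp : 0 < x a - x z := by linarith
      have hz1 := hX' z hz
      rw [e, div_lt_div_iff₀ hp ha']
      nlinarith [mul_pos (sub_pos.2 hxa) (sub_pos.2 hz2), mul_pos (sub_pos.2 hz1) ha']
    · intro z hz
      have hz2 := hv2 z hz
      have hp : 0 < x a - x z := by linarith [h2 z hz a ha]
      have hz1 := hY' z hz
      rw [e, div_lt_div_iff₀ ha' hp]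
      nlinarith [mul_pos (sub_pos.2 hxa) (sub_pos.2 hz2), mul_pos (sub_pos.2 hz1) ha']

/-- line `ab` misses `Y` -/
def FmaAv {α : Type*} (x y : α → ℝ) (a b : α) (Y : Finset α) : Prop :=
  (∀ z ∈ Y, fmaSl x y a z < fmaSl x y a b) ∨ (∀ z ∈ Y, fmaSl x y a b < fmaSl x y a z)

def FmaPart {α : Type*} (x y : α → ℝ) (X Y Z W : Finset α) : Prop :=
  ∃ G : α → ℝ, ∀ a ∈ X, ∀ b ∈ X, x a < x b →
    (G a ≤ G b → FmaAv x y a b Y) ∧ (G b ≤ G a → FmaAv x y a b Z ∧ FmaAv x y a b W)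

theorem fma_part1 {α : Type*} {x y : α → ℝ} {X Y Z W : Finset α} (hZ : Z.Nonempty)
    (h1 : FmaCut x y X Y Z) (h2 : FmaCut x y X Z W) : FmaPart x y X Y Z W := by
  obtain ⟨c, G, hG, hc⟩ := h1
  obtain ⟨c', G', hG', hc'⟩ := h2
  obtain ⟨z₀, hz₀⟩ := hZ
  refine ⟨fun a => - G a, ?_⟩
  intro a ha b hb hab
  have h := hG a ha b hb hab
  constructor
  · intro h'
    have := h.2 (by linarith)
    exact Or.inl fun z hz => ((hc a ha).1 z hz).trans_le this
  · intro h'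
    have := h.1 (by linarith)
    refine ⟨Or.inr fun z hz => this.trans_lt ((hc a ha).2 z hz), Or.inr fun z hz => ?_⟩
    have e1 := (hc a ha).2 z₀ hz₀
    have e2 := (hc' a ha).1 z₀ hz₀
    have e3 := (hc' a ha).2 z hz
    linarith

theorem fma_part2 {α : Type*} {x y : α → ℝ} {X Y Z W : Finset α} (hZ : Z.Nonempty)
    (h1 : FmaCut x y X Z Y) (h2 : FmaCut x y X W Z) : FmaPart x y X Y Z W := by
  obtain ⟨c, G, hG, hc⟩ := h1
  obtain ⟨c', G', hG', hc'⟩ := h2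
  obtain ⟨z₀, hz₀⟩ := hZ
  refine ⟨G, ?_⟩
  intro a ha b hb hab
  have h := hG a ha b hb hab
  constructor
  · intro h'
    have := h.1 h'
    exact Or.inr fun z hz => this.trans_lt ((hc a ha).2 z hz)
  · intro h'
    have := h.2 h'
    refine ⟨Or.inl fun z hz => ((hc a ha).1 z hz).trans_le this, Or.inl fun z hz => ?_⟩
    have e1 := (hc a ha).1 z₀ hz₀
    have e2 := (hc' a ha).2 z₀ hz₀
    have e3 := (hc' a ha).1 z hz
    linarith

theorem fma_part_swap {α : Type*} {x y : α → ℝ} {X Y Z W : Finset α}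
    (h : FmaPart x y X Y W Z) : FmaPart x y X Y Z W := by
  obtain ⟨G, h⟩ := h
  exact ⟨G, fun a ha b hb hab => ⟨(h a ha b hb hab).1, fun h' => ((h a ha b hb hab).2 h').symm⟩⟩

theorem fma_ext {α : Type*} {x y : α → ℝ} {X Y Z W : Finset α} (hZ : Z.Nonempty) (hW : W.Nonempty)
    (h : (FmaCut x y X Y Z ∧ FmaCut x y X Y W) ∨ (FmaCut x y X Z Y ∧ FmaCut x y X W Y))
    (h' : FmaCut x y X Z W ∨ FmaCut x y X W Z) : FmaPart x y X Y Z W := by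
  rcases h with ⟨a, b⟩ | ⟨a, b⟩ <;> rcases h' with h' | h'
  · exact fma_part1 hZ a h'
  · exact fma_part_swap (fma_part1 hW b h')
  · exact fma_part_swap (fma_part2 hW b h')
  · exact fma_part2 hZ a h'

theorem fma_cyc {α : Type*} {x y : α → ℝ} {X Y Z W : Finset α} (hX : X.Nonempty)
    (hY : Y.Nonempty) (hZ : Z.Nonempty) (hW : W.Nonempty) (h1 : FmaCut x y X Y Z)
    (h2 : FmaCut x y X Z W) (h3 : FmaCut x y X W Y) : False := by
  obtain ⟨_, _, _, h1⟩ := h1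
  obtain ⟨_, _, _, h2⟩ := h2
  obtain ⟨_, _, _, h3⟩ := h3
  obtain ⟨a, ha⟩ := hX
  obtain ⟨b, hb⟩ := hY
  obtain ⟨c, hc⟩ := hZ
  obtain ⟨d, hd⟩ := hW
  have := (h1 a ha).1 b hb
  have := (h1 a ha).2 c hc
  have := (h2 a ha).1 c hc
  have := (h2 a ha).2 d hd
  have := (h3 a ha).1 d hd
  have := (h3 a ha).2 b hb
  linarith

/-- data of one triple -/
def FmaTri {α : Type*} (x y : α → ℝ) (X Y Z : Finset α) : Prop :=
  FmaSep x y X Y Z ∨ FmaSep x (fun a => - y a) X Y Z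

theorem fma_tri_cut {α : Type*} {x y : α → ℝ} {X Y Z : Finset α} (hX : X.Nonempty)
    (hY : Y.Nonempty) (hZ : Z.Nonempty)
    (h1 : FmaLt x X Y) (h2 : FmaLt x Y Z) (h : FmaTri x y X Y Z) :
    (FmaCut x y X Y Z ∧ FmaCut x y Y X Z ∧ FmaCut x y Z X Y) ∨
    (FmaCut x y X Z Y ∧ FmaCut x y Y Z X ∧ FmaCut x y Z Y X) := by
  rcases h with h | h
  · exact Or.inl ⟨fma_cut_left hY hZ h1 h2 h, fma_cut_mid h1 h2 h, fma_cut_right hX hY h1 h2 h⟩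
  · exact Or.inr ⟨fma_cut_neg (fma_cut_left hY hZ h1 h2 h), fma_cut_neg (fma_cut_mid h1 h2 h),
      fma_cut_neg (fma_cut_right hX hY h1 h2 h)⟩

theorem fma_match {α : Type*} {x y : α → ℝ} {A B C D : Finset α} (hA : A.Nonempty)
    (hB : B.Nonempty) (hC : C.Nonempty) (hD : D.Nonempty)
    (hAB : FmaLt x A B) (hBC : FmaLt x B C) (hCD : FmaLt x C D)
    (t1 : FmaTri x y A B C) (t2 : FmaTri x y A B D) (t3 : FmaTri x y A C D)
    (t4 : FmaTri x y B C D) :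
    (FmaPart x y A B C D ∧ FmaPart x y B A C D ∧ FmaPart x y C D A B ∧ FmaPart x y D C A B) ∨
    (FmaPart x y A D B C ∧ FmaPart x y D A B C ∧ FmaPart x y B C A D ∧ FmaPart x y C B A D) := by
  have hAC : FmaLt x A C := fun a ha c hc => by
    obtain ⟨b, hb⟩ := hB; exact (hAB a ha b hb).trans (hBC b hb c hc)
  have hBD : FmaLt x B D := fun a ha c hc => by
    obtain ⟨b, hb⟩ := hC; exact (hBC a ha b hb).trans (hCD b hb c hc)
  have u1 := fma_tri_cut hA hB hC hAB hBC t1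
  have u2 := fma_tri_cut hA hB hD hAB hBD t2
  have u3 := fma_tri_cut hA hC hD hAC hCD t3
  have u4 := fma_tri_cut hB hC hD hBC hCD t4
  rcases u1 with ⟨a1, a2, a3⟩ | ⟨a1, a2, a3⟩ <;> rcases u2 with ⟨b1, b2, b3⟩ | ⟨b1, b2, b3⟩ <;>
  rcases u3 with ⟨c1, c2, c3⟩ | ⟨c1, c2, c3⟩ <;> rcases u4 with ⟨d1, d2, d3⟩ | ⟨d1, d2, d3⟩ <;>
  first
  | exact (fma_cyc hA hB hC hD ‹_› ‹_› ‹_›).elim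
  | exact (fma_cyc hA hB hD hC ‹_› ‹_› ‹_›).elim
  | exact (fma_cyc hB hA hC hD ‹_› ‹_› ‹_›).elim
  | exact (fma_cyc hB hA hD hC ‹_› ‹_› ‹_›).elim
  | exact (fma_cyc hC hA hB hD ‹_› ‹_› ‹_›).elim
  | exact (fma_cyc hC hA hD hB ‹_› ‹_› ‹_›).elim
  | exact (fma_cyc hD hA hB hC ‹_› ‹_› ‹_›).elim
  | exact (fma_cyc hD hA hC hB ‹_› ‹_› ‹_›).elim
  | exact Or.inl ⟨fma_ext hC hD (by tauto) (by tauto), fma_ext hC hD (by tauto) (by tauto),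
      fma_ext hA hB (by tauto) (by tauto), fma_ext hA hB (by tauto) (by tauto)⟩
  | exact Or.inr ⟨fma_ext hB hC (by tauto) (by tauto), fma_ext hB hC (by tauto) (by tauto),
      fma_ext hA hD (by tauto) (by tauto), fma_ext hA hD (by tauto) (by tauto)⟩

theorem fma_hs {α : Type*} (X Z : Finset α) (hX : X.Nonempty) (hZ : Z.Nonempty) (x y : α → ℝ)
    (h : FmaLt x X Z) : ∃ l c : ℝ,
      X.card ≤ 4 * (X.filter (fun a => y a ≤ l * x a + c)).card ∧
      X.card ≤ 4 * (X.filter (fun a => l * x a + c ≤ y a)).card ∧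
      Z.card ≤ 4 * (Z.filter (fun a => y a ≤ l * x a + c)).card ∧
      Z.card ≤ 4 * (Z.filter (fun a => l * x a + c ≤ y a)).card := by
  classical
  obtain ⟨l, hl1, hl2⟩ := fma_quant 2 (by norm_num) (X ×ˢ Z) (hX.product hZ)
    (fun p => fmaSl x y p.1 p.2)
  set f : α → ℝ := fun a => y a - l * x a with hf
  obtain ⟨x1, hx1, hx1'⟩ := fma_quant 4 (by norm_num) X hX f
  obtain ⟨x3, hx3, hx3'⟩ := fma_quant 4 (by norm_num) X hX (fun a => - f a)
  obtain ⟨z1, hz1, hz1'⟩ := fma_quant 4 (by norm_num) Z hZ f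
  obtain ⟨z3, hz3, hz3'⟩ := fma_quant 4 (by norm_num) Z hZ (fun a => - f a)
  -- upper quantiles are `-x3`, `-z3`
  have own : ∀ (S : Finset α) (u v : ℝ), 4 * (S.filter (fun a => f a < u)).card < S.card →
      4 * (S.filter (fun a => - f a < v)).card < S.card → u ≤ - v := by
    intro S u v h1 h2
    by_contra hlt
    push Not at hlt
    have : S ⊆ (S.filter (fun a => f a < u)) ∪ (S.filter (fun a => - f a < v)) := by
      intro a ha
      simp only [Finset.mem_union, Finset.mem_filter]
      by_cases h : f a < u
      · exact Or.inl ⟨ha, h⟩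
      · right; refine ⟨ha, ?_⟩; push Not at h; linarith
    have := (Finset.card_le_card this).trans (Finset.card_union_le _ _)
    omega
  have hxx := own X x1 x3 hx1' hx3'
  have hzz := own Z z1 z3 hz1' hz3'
  have cnt : ∀ (Q : Finset (α × α)) (U V : Finset α), Q ⊆ (U ×ˢ Z) ∪ (X ×ˢ V) →
      4 * U.card < X.card → 4 * V.card < Z.card → 2 * Q.card < X.card * Z.card := by
    intro Q U V hQ hU hV
    have h1 := (Finset.card_le_card hQ).trans (Finset.card_union_le _ _)
    rw [Finset.card_product, Finset.card_product] at h1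
    have h2 : 4 * U.card * Z.card < X.card * Z.card :=
      Nat.mul_lt_mul_of_pos_right hU (Finset.card_pos.2 hZ)
    have h3 : X.card * (4 * V.card) < X.card * Z.card :=
      Nat.mul_lt_mul_of_pos_left hV (Finset.card_pos.2 hX)
    have h4 : 4 * U.card * Z.card = 4 * (U.card * Z.card) := by ring
    have h5 : X.card * (4 * V.card) = 4 * (X.card * V.card) := by ring
    omega
  rw [Finset.card_product] at hl1 hl2
  have hzx : z1 ≤ - x3 := by
    by_contra hlt
    push Not at hlt
    have := cnt ((X ×ˢ Z).filter (fun p => fmaSl x y p.1 p.2 ≤ l)) _ _ ?_ hx3' hz1'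
    · omega
    · rintro ⟨a, b⟩ hp
      simp only [Finset.mem_filter, Finset.mem_product, Finset.mem_union] at hp ⊢
      obtain ⟨⟨ha, hb⟩, hs⟩ := hp
      have hp : 0 < x b - x a := by linarith [h a ha b hb]
      unfold fmaSl at hs; rw [div_le_iff₀ hp] at hs
      have hfab : f b ≤ f a := by simp only [hf]; linarith
      by_cases hfa : - f a < x3
      · exact Or.inl ⟨⟨ha, hfa⟩, hb⟩
      · right; refine ⟨ha, hb, ?_⟩; push Not at hfa; linarith
  have hxz : x1 ≤ - z3 := by
    by_contra hlt
    push Not at hlt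
    have hsplit := Finset.card_filter_add_card_filter_not (s := X ×ˢ Z)
      (fun p => fmaSl x y p.1 p.2 < l)
    rw [Finset.card_product] at hsplit
    have := cnt ((X ×ˢ Z).filter (fun p => ¬ fmaSl x y p.1 p.2 < l)) _ _ ?_ hx1' hz3'
    · omega
    · rintro ⟨a, b⟩ hp
      simp only [Finset.mem_filter, Finset.mem_product, Finset.mem_union] at hp ⊢
      obtain ⟨⟨ha, hb⟩, hs⟩ := hp
      have hp : 0 < x b - x a := by linarith [h a ha b hb]
      rw [not_lt] at hs
      unfold fmaSl at hs; rw [le_div_iff₀ hp] at hs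
      have hfab : f a ≤ f b := by simp only [hf]; linarith
      by_cases hfa : f a < x1
      · exact Or.inl ⟨⟨ha, hfa⟩, hb⟩
      · right; refine ⟨ha, hb, ?_⟩; push Not at hfa; linarith
  have hc1 : max x1 z1 ≤ - x3 := max_le hxx hzx
  have hc2 : max x1 z1 ≤ - z3 := max_le hxz hzz
  have mono : ∀ (S : Finset α) (p q : α → Prop), (∀ a, p a → q a) →
      S.card ≤ 4 * (S.filter p).card → S.card ≤ 4 * (S.filter q).card := by
    intro S p q hpq hc
    have := Finset.card_le_card (Finset.monotone_filter_right S (p := p) (q := q) (fun a _ => hpq a))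
    omega
  refine ⟨l, max x1 z1, ?_, ?_, ?_, ?_⟩
  · exact mono X _ _ (fun a ha => by have := le_max_left x1 z1; simp only [hf] at ha; linarith) hx1
  · exact mono X _ _ (fun a ha => by simp only [hf] at ha; linarith) hx3
  · exact mono Z _ _ (fun a ha => by have := le_max_right x1 z1; simp only [hf] at ha; linarith) hz1
  · exact mono Z _ _ (fun a ha => by simp only [hf] at ha; linarith) hz3

theorem fma_tri_exists {α : Type*} (P X Y Z : Finset α) (x y : α → ℝ)
    (hgp : ∀ l c : ℝ, (P.filter (fun a => y a = l * x a + c)).card ≤ 2)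
    (hXP : X ⊆ P) (hYP : Y ⊆ P) (hZP : Z ⊆ P)
    (hX : X.Nonempty) (hZ : Z.Nonempty) (h : FmaLt x X Z) :
    ∃ X' ⊆ X, ∃ Y' ⊆ Y, ∃ Z' ⊆ Z, X.card ≤ 4 * (X'.card + 2) ∧ Y.card ≤ 4 * (Y'.card + 2) ∧
      Z.card ≤ 4 * (Z'.card + 2) ∧ FmaTri x y X' Y' Z' := by
  classical
  obtain ⟨l, c, h1, h2, h3, h4⟩ := fma_hs X Z hX hZ x y h
  have eqc : ∀ S ⊆ P, (S.filter (fun a => y a = l * x a + c)).card ≤ 2 := fun S hS =>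
    (Finset.card_le_card (Finset.filter_subset_filter _ hS)).trans (hgp l c)
  have up : ∀ S ⊆ P, (S.filter (fun a => l * x a + c ≤ y a)).card ≤
      (S.filter (fun a => l * x a + c < y a)).card + 2 := by
    intro S hS
    have : S.filter (fun a => l * x a + c ≤ y a) ⊆ (S.filter (fun a => l * x a + c < y a)) ∪
        (S.filter (fun a => y a = l * x a + c)) := by
      intro a ha
      simp only [Finset.mem_union, Finset.mem_filter] at ha ⊢
      rcases ha.2.lt_or_eq with h | h
      · exact Or.inl ⟨ha.1, h⟩
      · exact Or.inr ⟨ha.1, h.symm⟩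
    have := (Finset.card_le_card this).trans (Finset.card_union_le _ _)
    have := eqc S hS
    omega
  have dn : ∀ S ⊆ P, (S.filter (fun a => y a ≤ l * x a + c)).card ≤
      (S.filter (fun a => y a < l * x a + c)).card + 2 := by
    intro S hS
    have : S.filter (fun a => y a ≤ l * x a + c) ⊆ (S.filter (fun a => y a < l * x a + c)) ∪
        (S.filter (fun a => y a = l * x a + c)) := by
      intro a ha
      simp only [Finset.mem_union, Finset.mem_filter] at ha ⊢
      rcases ha.2.lt_or_eq with h | h
      · exact Or.inl ⟨ha.1, h⟩
      · exact Or.inr ⟨ha.1, h⟩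
    have := (Finset.card_le_card this).trans (Finset.card_union_le _ _)
    have := eqc S hS
    omega
  have hYs : Y.card ≤ (Y.filter (fun a => y a < l * x a + c)).card +
      (Y.filter (fun a => l * x a + c < y a)).card + 2 := by
    have h1 := Finset.card_filter_add_card_filter_not (s := Y) (fun a => y a < l * x a + c)
    simp only [not_lt] at h1
    have := up Y hYP
    omega
  have u1 := up X hXP
  have u2 := up Z hZP
  have d1 := dn X hXP
  have d2 := dn Z hZP
  by_cases hc : (Y.filter (fun a => l * x a + c < y a)).card ≤
      (Y.filter (fun a => y a < l * x a + c)).card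
  · refine ⟨X.filter (fun a => l * x a + c < y a), Finset.filter_subset _ _,
      Y.filter (fun a => y a < l * x a + c), Finset.filter_subset _ _,
      Z.filter (fun a => l * x a + c < y a), Finset.filter_subset _ _, by omega, by omega,
      by omega, Or.inl ⟨l, c, ?_, ?_, ?_⟩⟩ <;>
    · intro a ha; exact (Finset.mem_filter.1 ha).2
  · refine ⟨X.filter (fun a => y a < l * x a + c), Finset.filter_subset _ _,
      Y.filter (fun a => l * x a + c < y a), Finset.filter_subset _ _,
      Z.filter (fun a => y a < l * x a + c), Finset.filter_subset _ _, by omega, by omega,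
      by omega, Or.inr ⟨-l, -c, ?_, ?_, ?_⟩⟩ <;>
    · intro a ha; have := (Finset.mem_filter.1 ha).2; linarith

theorem fma_tri_mono {α : Type*} {x y : α → ℝ} {X Y Z X' Y' Z' : Finset α} (hX : X' ⊆ X)
    (hY : Y' ⊆ Y) (hZ : Z' ⊆ Z) (h : FmaTri x y X Y Z) : FmaTri x y X' Y' Z' := by
  rcases h with ⟨l, c, h1, h2, h3⟩ | ⟨l, c, h1, h2, h3⟩
  · exact Or.inl ⟨l, c, fun a ha => h1 a (hX ha), fun a ha => h2 a (hY ha), fun a ha => h3 a (hZ ha)⟩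
  · exact Or.inr ⟨l, c, fun a ha => h1 a (hX ha), fun a ha => h2 a (hY ha), fun a ha => h3 a (hZ ha)⟩

theorem fma_lt_mono {α : Type*} {x : α → ℝ} {X Y X' Y' : Finset α} (hX : X' ⊆ X)
    (hY : Y' ⊆ Y) (h : FmaLt x X Y) : FmaLt x X' Y' :=
  fun a ha b hb => h a (hX ha) b (hY hb)

theorem fma_four {α : Type*} (P : Finset α) (x y : α → ℝ) (hx : Set.InjOn x P)
    (hgp : ∀ l c : ℝ, (P.filter (fun a => y a = l * x a + c)).card ≤ 2)
    (hP : 20000 ≤ P.card) :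
    ∃ A B C D : Finset α, A ⊆ P ∧ B ⊆ P ∧ C ⊆ P ∧ D ⊆ P ∧
      P.card ≤ 256 * A.card + 675 ∧ P.card ≤ 256 * B.card + 675 ∧
      P.card ≤ 256 * C.card + 675 ∧ P.card ≤ 256 * D.card + 675 ∧
      FmaLt x A B ∧ FmaLt x B C ∧ FmaLt x C D ∧
      FmaTri x y A B C ∧ FmaTri x y A B D ∧ FmaTri x y A C D ∧ FmaTri x y B C D := by
  classical
  obtain ⟨r, r1, r2, r3⟩ := fma_rank x P
  set q := P.card / 4 with hq
  have himg : P.image r = Finset.range P.card := by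
    apply Finset.eq_of_subset_of_card_le
    · intro i hi
      obtain ⟨a, ha, rfl⟩ := Finset.mem_image.1 hi
      exact Finset.mem_range.2 (r2 a ha)
    · rw [Finset.card_image_of_injOn r1, Finset.card_range]
  let S : ℕ → Finset α := fun i => P.filter (fun a => r a ∈ Finset.Ico (i * q) (i * q + q))
  have hSP : ∀ i, S i ⊆ P := fun i => Finset.filter_subset _ _
  have hSc : ∀ i < 4, q ≤ (S i).card := by
    intro i hi
    have : Finset.Ico (i * q) (i * q + q) ⊆ (S i).image r := by
      intro j hj
      have hj' := Finset.mem_Ico.1 hj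
      have hjr : j ∈ P.image r := by
        rw [himg, Finset.mem_range]
        have : i * q ≤ 3 * q := Nat.mul_le_mul_right _ (by omega)
        omega
      obtain ⟨a, ha, rfl⟩ := Finset.mem_image.1 hjr
      exact Finset.mem_image_of_mem _ (Finset.mem_filter.2 ⟨ha, hj⟩)
    have := (Finset.card_le_card this).trans Finset.card_image_le
    simpa using this
  have hSlt : ∀ i j, i < j → FmaLt x (S i) (S j) := by
    intro i j hij a ha b hb
    simp only [S, Finset.mem_filter, Finset.mem_Ico] at ha hb
    have h0 : (i + 1) * q ≤ j * q := Nat.mul_le_mul_right _ hij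
    have hlt : r a < r b := by
      have : (i + 1) * q = i * q + q := by ring
      omega
    apply lt_of_le_of_ne (r3 a ha.1 b hb.1 hlt.le)
    intro h
    have := hx ha.1 hb.1 h
    subst this; omega
  have hn : ∀ T : Finset α, 1 ≤ T.card → T.Nonempty := fun T hT => Finset.card_pos.1 hT
  have c0 := hSc 0 (by norm_num)
  have c1 := hSc 1 (by norm_num)
  have c2 := hSc 2 (by norm_num)
  have c3 := hSc 3 (by norm_num)
  obtain ⟨A1, hA1, B1, hB1, C1, hC1, a1, b1, d1, T1⟩ := fma_tri_exists P (S 0) (S 1) (S 2) x y hgp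
    (hSP 0) (hSP 1) (hSP 2) (hn _ (by omega)) (hn _ (by omega)) (hSlt 0 2 (by norm_num))
  obtain ⟨A2, hA2, B2, hB2, D1, hD1, a2, b2, e1, T2⟩ := fma_tri_exists P A1 B1 (S 3) x y hgp
    (hA1.trans (hSP 0)) (hB1.trans (hSP 1)) (hSP 3) (hn _ (by omega)) (hn _ (by omega))
    (fma_lt_mono hA1 subset_rfl (hSlt 0 3 (by norm_num)))
  obtain ⟨A3, hA3, C2, hC2, D2, hD2, a3, d2, e2, T3⟩ := fma_tri_exists P A2 C1 D1 x y hgp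
    (hA2.trans (hA1.trans (hSP 0))) (hC1.trans (hSP 2)) (hD1.trans (hSP 3)) (hn _ (by omega))
    (hn _ (by omega))
    (fma_lt_mono (hA2.trans hA1) hD1 (hSlt 0 3 (by norm_num)))
  obtain ⟨B3, hB3, C3, hC3, D3, hD3, b3, d3, e3, T4⟩ := fma_tri_exists P B2 C2 D2 x y hgp
    (hB2.trans (hB1.trans (hSP 1))) (hC2.trans (hC1.trans (hSP 2)))
    (hD2.trans (hD1.trans (hSP 3))) (hn _ (by omega)) (hn _ (by omega))
    (fma_lt_mono (hB2.trans hB1) (hD2.trans hD1) (hSlt 1 3 (by norm_num)))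
  have sA := hA3.trans (hA2.trans hA1)
  have sB := hB3.trans (hB2.trans hB1)
  have sC := hC3.trans (hC2.trans hC1)
  have sD := hD3.trans (hD2.trans hD1)
  refine ⟨A3, B3, C3, D3, sA.trans (hSP 0), sB.trans (hSP 1), sC.trans (hSP 2), sD.trans (hSP 3),
    by omega, by omega, by omega, by omega,
    fma_lt_mono sA sB (hSlt 0 1 (by norm_num)), fma_lt_mono sB sC (hSlt 1 2 (by norm_num)),
    fma_lt_mono sC sD (hSlt 2 3 (by norm_num)),
    fma_tri_mono (hA3.trans hA2) (hB3.trans hB2) (hC3.trans hC2) T1,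
    fma_tri_mono hA3 hB3 (hD3.trans hD2) T2,
    fma_tri_mono subset_rfl hC3 hD3 T3, T4⟩

def FmaGood {α : Type*} (k t : ℕ) (x y : α → ℝ) (X Y : Finset α) : Prop :=
  ∃ A : Fin k → Finset α, (∀ i, A i ⊆ X) ∧ (∀ i j, i ≠ j → Disjoint (A i) (A j)) ∧
    (∀ i, t ≤ (A i).card) ∧
    (∀ i j, i ≠ j → ∀ a ∈ A i, ∀ b ∈ A j, x a < x b → FmaAv x y a b Y)

theorem fma_good {α : Type*} {k t : ℕ} {x y : α → ℝ} {X Y Z W : Finset α}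
    (hk : 1 ≤ k) (ht : 1 ≤ t)
    (hm : 75 * k ^ 2 ≤ X.card) (hmt : 1000 * k ^ 4 * (t - 1) ≤ X.card)
    (h : FmaPart x y X Y Z W) :
    FmaGood k t x y X Y ∨ (FmaGood k t x y X Z ∧ FmaGood k t x y X W) := by
  obtain ⟨G, hG⟩ := h
  obtain ⟨A, h1, h2, h3, h4 | h4⟩ := fma_frac k t hk ht X x G hm hmt
  · left
    exact ⟨A, h1, h2, h3, fun i j hij a ha b hb hab =>
      (hG a (h1 i ha) b (h1 j hb) hab).1 (h4 i j hij a ha b hb hab)⟩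
  · right
    exact ⟨⟨A, h1, h2, h3, fun i j hij a ha b hb hab =>
      ((hG a (h1 i ha) b (h1 j hb) hab).2 (h4 i j hij a ha b hb hab)).1⟩,
      ⟨A, h1, h2, h3, fun i j hij a ha b hb hab =>
      ((hG a (h1 i ha) b (h1 j hb) hab).2 (h4 i j hij a ha b hb hab)).2⟩⟩

theorem fma_prop {ab ba ac ca ad da bc cb bd db cd dc : Prop} (g1 : ab ∨ (ac ∧ ad))
    (g2 : ba ∨ (bc ∧ bd)) (g3 : cd ∨ (ca ∧ cb)) (g4 : dc ∨ (da ∧ db)) :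
    (ab ∧ ba) ∨ (ac ∧ ca) ∨ (ad ∧ da) ∨ (bc ∧ cb) ∨ (bd ∧ db) ∨ (cd ∧ dc) := by
  rcases g1 with g1 | g1 <;> rcases g2 with g2 | g2 <;> rcases g3 with g3 | g3 <;>
    rcases g4 with g4 | g4 <;> simp [*]

theorem fma_core {α : Type*} (P : Finset α) (x y : α → ℝ) (hx : Set.InjOn x P)
    (hgp : ∀ l c : ℝ, (P.filter (fun a => y a = l * x a + c)).card ≤ 2)
    (k t : ℕ) (hk : 1 ≤ k) (ht : 1 ≤ t) (hP : 12 * (40 * k + 1) ^ 2 < P.card)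
    (hPt : 300000 * k ^ 4 * (t - 1) ≤ P.card) :
    ∃ X Y : Finset α, X ⊆ P ∧ Y ⊆ P ∧ FmaLt x X Y ∧ FmaGood k t x y X Y ∧ FmaGood k t x y Y X := by
  have hP' : 12 * (40 * k + 1) ^ 2 = 19200 * k ^ 2 + 960 * k + 12 := by ring
  have hk2 : 1 ≤ k ^ 2 := Nat.one_le_pow _ _ hk
  obtain ⟨A, B, C, D, hA, hB, hC, hD, a, b, c, d, hAB, hBC, hCD, T1, T2, T3, T4⟩ :=
    fma_four P x y hx hgp (by omega)
  have hn : ∀ T : Finset α, P.card ≤ 256 * T.card + 675 → T.Nonempty := fun T hT =>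
    Finset.card_pos.1 (by omega)
  have hm : ∀ T : Finset α, P.card ≤ 256 * T.card + 675 → 75 * k ^ 2 ≤ T.card := fun T hT => by
    omega
  have hmt : ∀ T : Finset α, P.card ≤ 256 * T.card + 675 → 1000 * k ^ 4 * (t - 1) ≤ T.card := by
    intro T hT
    have e1 : 300000 * k ^ 4 * (t - 1) = 300000 * (k ^ 4 * (t - 1)) := by ring
    have e2 : 1000 * k ^ 4 * (t - 1) = 1000 * (k ^ 4 * (t - 1)) := by ring
    omega
  have nA := hn A a
  have nB := hn B b
  have nC := hn C c
  have nD := hn D d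
  have hAC : FmaLt x A C := fun a ha c hc => by
    obtain ⟨b, hb⟩ := nB; exact (hAB a ha b hb).trans (hBC b hb c hc)
  have hBD : FmaLt x B D := fun a ha c hc => by
    obtain ⟨b, hb⟩ := nC; exact (hBC a ha b hb).trans (hCD b hb c hc)
  have hAD : FmaLt x A D := fun a ha c hc => by
    obtain ⟨b, hb⟩ := nB; exact (hAB a ha b hb).trans (hBD b hb c hc)
  have key : (FmaGood k t x y A B ∧ FmaGood k t x y B A) ∨ (FmaGood k t x y A C ∧ FmaGood k t x y C A)
      ∨ (FmaGood k t x y A D ∧ FmaGood k t x y D A) ∨ (FmaGood k t x y B C ∧ FmaGood k t x y C B)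
      ∨ (FmaGood k t x y B D ∧ FmaGood k t x y D B) ∨ (FmaGood k t x y C D ∧ FmaGood k t x y D C) := by
    rcases fma_match nA nB nC nD hAB hBC hCD T1 T2 T3 T4 with ⟨p1, p2, p3, p4⟩ | ⟨p1, p2, p3, p4⟩
    · have g1 := fma_good hk ht (hm _ a) (hmt _ a) p1
      have g2 := fma_good hk ht (hm _ b) (hmt _ b) p2
      have g3 := fma_good hk ht (hm _ c) (hmt _ c) p3
      have g4 := fma_good hk ht (hm _ d) (hmt _ d) p4
      exact fma_prop g1 g2 g3 g4
    · have g1 := fma_good hk ht (hm _ a) (hmt _ a) p1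
      have g2 := fma_good hk ht (hm _ d) (hmt _ d) p2
      have g3 := fma_good hk ht (hm _ b) (hmt _ b) p3
      have g4 := fma_good hk ht (hm _ c) (hmt _ c) p4
      have := fma_prop g1 g2 g3 g4
      rcases this with h | h | h | h | h | h
      · exact Or.inr (Or.inr (Or.inl h))
      · exact Or.inl h
      · exact Or.inr (Or.inl h)
      · exact Or.inr (Or.inr (Or.inr (Or.inr (Or.inl h.symm))))
      · exact Or.inr (Or.inr (Or.inr (Or.inr (Or.inr h.symm))))
      · exact Or.inr (Or.inr (Or.inr (Or.inl h)))
  rcases key with h | h | h | h | h | h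
  · exact ⟨A, B, hA, hB, hAB, h⟩
  · exact ⟨A, C, hA, hC, hAC, h⟩
  · exact ⟨A, D, hA, hD, hAD, h⟩
  · exact ⟨B, C, hB, hC, hBC, h⟩
  · exact ⟨B, D, hB, hD, hBD, h⟩
  · exact ⟨C, D, hC, hD, hCD, h⟩

theorem fma_disj (x y : Plane →ₗ[ℝ] ℝ) (a b : Plane) (hab : x a < x b) (W : Finset Plane)
    (S : Set Plane) (hSW : S ⊆ W) (hside : (∀ z ∈ W, x a < x z) ∨ (∀ z ∈ W, x z < x a))
    (h : FmaAv x y a b W) :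
    Disjoint ((affineSpan ℝ ({a, b} : Set Plane) : AffineSubspace ℝ Plane) : Set Plane)
      (convexHull ℝ S) := by
  set M : Plane →ₗ[ℝ] ℝ := (x b - x a) • y - (y b - y a) • x with hM
  have hMv : ∀ z, M z = (x b - x a) * y z - (y b - y a) * x z := by
    intro z; simp [hM]
  have hline : ∀ z ∈ affineSpan ℝ ({a, b} : Set Plane), M z = M a := by
    intro z hz
    obtain ⟨t, rfl⟩ := (mem_affineSpan_pair_iff_exists_lineMap_eq).1 hz
    rw [AffineMap.lineMap_apply_module', map_add, map_smul, map_sub]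
    have : M b - M a = 0 := by rw [hMv, hMv]; ring
    rw [this]; simp
  have hp : 0 < x b - x a := sub_pos.2 hab
  have hval : ∀ z, x z ≠ x a → M z - M a =
      (x b - x a) * (x z - x a) * (fmaSl x y a z - fmaSl x y a b) := by
    intro z hz
    have h1 : x z - x a ≠ 0 := sub_ne_zero.2 hz
    have h2 : x b - x a ≠ 0 := hp.ne'
    unfold fmaSl
    rw [hMv, hMv]
    field_simp
    ring
  have hsg : (∀ z ∈ S, M a < M z) ∨ (∀ z ∈ S, M z < M a) := by
    rcases hside with hs | hs <;> rcases h with h | h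
    · right; intro z hz
      have h1 := hs z (hSW hz); have h2 := h z (hSW hz)
      have := hval z h1.ne'
      nlinarith [mul_pos (mul_pos hp (sub_pos.2 h1)) (sub_pos.2 h2)]
    · left; intro z hz
      have h1 := hs z (hSW hz); have h2 := h z (hSW hz)
      have := hval z h1.ne'
      nlinarith [mul_pos (mul_pos hp (sub_pos.2 h1)) (sub_pos.2 h2)]
    · left; intro z hz
      have h1 := hs z (hSW hz); have h2 := h z (hSW hz)
      have := hval z h1.ne
      nlinarith [mul_pos (mul_pos hp (sub_pos.2 h1)) (sub_pos.2 h2)]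
    · right; intro z hz
      have h1 := hs z (hSW hz); have h2 := h z (hSW hz)
      have := hval z h1.ne
      nlinarith [mul_pos (mul_pos hp (sub_pos.2 h1)) (sub_pos.2 h2)]
  rw [Set.disjoint_left]
  intro z hz hzS
  have hz' := hline z hz
  rcases hsg with h | h
  · have := convexHull_min (fun z hz => h z hz : S ⊆ {w | M a < M w})
      (convex_halfSpace_gt M.isLinear _) hzS
    have : M a < M z := this
    linarith
  · have := convexHull_min (fun z hz => h z hz : S ⊆ {w | M w < M a})
      (convex_halfSpace_lt M.isLinear _) hzS
    have : M z < M a := this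
    linarith

theorem fma_avoids (x y : Plane →ₗ[ℝ] ℝ) (P X Y : Finset Plane) (hx : Set.InjOn x P) (hXP : X ⊆ P)
    (hside : ∀ a ∈ X, (∀ z ∈ Y, x a < x z) ∨ (∀ z ∈ Y, x z < x a)) (k : ℕ)
    (A : Fin k → Finset Plane) (hA : ∀ i, A i ⊆ X)
    (hav : ∀ i j, i ≠ j → ∀ a ∈ A i, ∀ b ∈ A j, x a < x b → FmaAv x y a b Y)
    (a b : Fin k → Plane) (ha : ∀ i, a i ∈ A i) (hb : ∀ i, b i ∈ Y) :
    Avoids2 (Set.range a) (Set.range b) := by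
  rintro _ ⟨i, rfl⟩ _ ⟨j, rfl⟩ hne
  have hij : i ≠ j := fun h => hne (by rw [h])
  have hS : Set.range b ⊆ (Y : Set Plane) := by rintro _ ⟨i, rfl⟩; exact hb i
  have hxne : x (a i) ≠ x (a j) := fun h => hne (hx (hXP (hA i (ha i))) (hXP (hA j (ha j))) h)
  rcases lt_or_gt_of_ne hxne with h | h
  · exact fma_disj x y _ _ h Y _ hS (hside _ (hA i (ha i))) (hav i j hij _ (ha i) _ (ha j) h)
  · rw [Set.pair_comm]
    exact fma_disj x y _ _ h Y _ hS (hside _ (hA j (ha j))) (hav j i hij.symm _ (ha j) _ (ha i) h)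

theorem fma_coord (P : Finset Plane) (hgp : GenPos2 (P : Set Plane)) :
    ∃ x y : Plane →ₗ[ℝ] ℝ, Set.InjOn x P ∧
      ∀ l c : ℝ, (P.filter (fun a => y a = l * x a + c)).card ≤ 2 := by
  classical
  obtain ⟨ε, hε⟩ := Infinite.exists_notMem_finset
    ((P ×ˢ P).image (fun p => - (p.1 0 - p.2 0) / (p.1 1 - p.2 1)))
  let p0 : Plane →ₗ[ℝ] ℝ := (EuclideanSpace.proj (0 : Fin 2) : Plane →L[ℝ] ℝ).toLinearMap
  let p1 : Plane →ₗ[ℝ] ℝ := (EuclideanSpace.proj (1 : Fin 2) : Plane →L[ℝ] ℝ).toLinearMap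
  have e0 : ∀ z, p0 z = z 0 := fun z => rfl
  have e1 : ∀ z, p1 z = z 1 := fun z => rfl
  have ex : ∀ z, (p0 + ε • p1) z = z 0 + ε * z 1 := fun z => rfl
  refine ⟨p0 + ε • p1, p1, ?_, ?_⟩
  · intro a ha b hb hab
    rw [ex, ex] at hab
    have h1 : a 1 = b 1 := by
      by_contra hne
      apply hε
      rw [Finset.mem_image]
      refine ⟨(a, b), Finset.mem_product.2 ⟨ha, hb⟩, ?_⟩
      have : a 1 - b 1 ≠ 0 := sub_ne_zero.2 hne
      rw [div_eq_iff this]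
      linarith
    have h0 : a 0 = b 0 := by rw [h1] at hab; linarith
    ext i; fin_cases i
    · exact h0
    · exact h1
  · intro l c
    by_contra hcon
    push Not at hcon
    obtain ⟨a, b, d, ha, hb, hd, hab, had, hbd⟩ := Finset.two_lt_card_iff.1 hcon
    simp only [Finset.mem_filter, ex, e1] at ha hb hd
    apply hgp a ha.1 b hb.1 d hd.1 hab had hbd
    rw [collinear_iff_of_mem (p₀ := a) (by simp)]
    refine ⟨!₂[1 - ε * l, l], ?_⟩
    have key : ∀ p : Plane, p 1 = l * (p 0 + ε * p 1) + c →
        ∃ r : ℝ, p = r • !₂[1 - ε * l, l] +ᵥ a := by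
      intro p hp
      refine ⟨(p 0 + ε * p 1) - (a 0 + ε * a 1), ?_⟩
      have h1 : p 1 - a 1 = l * ((p 0 + ε * p 1) - (a 0 + ε * a 1)) := by
        linarith [ha.2]
      ext i; fin_cases i
      · simp
        linear_combination (-ε) * h1
      · simp
        linear_combination h1
    intro p hp
    simp only [Set.mem_insert_iff, Set.mem_singleton_iff] at hp
    rcases hp with rfl | rfl | rfl
    · exact key _ ha.2
    · exact key _ hb.2
    · exact key _ hd.2

/-- Positive fraction mutually avoiding sets theorem in the plane. -/
theorem fractional_mutually_avoiding (k : ℕ) (hk : 1 ≤ k) (P : Finset Plane) (n : ℕ)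
    (hn : P.card = n) (hgp : GenPos2 (P : Set Plane))
    (hbig : 12 * (40 * k + 1) ^ 2 < n) :
    ∃ A B : Fin k → Finset Plane,
      (∀ i, A i ⊆ P) ∧ (∀ i, B i ⊆ P) ∧
      (∀ i j, i ≠ j → Disjoint (A i) (A j)) ∧
      (∀ i j, i ≠ j → Disjoint (B i) (B j)) ∧
      (∀ i j, Disjoint (A i) (B j)) ∧
      (∀ i, (n : ℝ) / (1320 * (k : ℝ)) ^ 4 ≤ (A i).card) ∧
      (∀ i, (n : ℝ) / (1320 * (k : ℝ)) ^ 4 ≤ (B i).card) ∧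
      (∀ a b : Fin k → Plane, (∀ i, a i ∈ A i) → (∀ i, b i ∈ B i) →
        MutuallyAvoiding2 (Set.range a) (Set.range b)) := by
  classical
  obtain ⟨x, y, hx, hline⟩ := fma_coord P hgp
  set t := max 1 ⌈(n : ℝ) / (1320 * (k : ℝ)) ^ 4⌉₊ with ht
  have hkR : (1 : ℝ) ≤ k := by exact_mod_cast hk
  have hpos : (0 : ℝ) < (1320 * (k : ℝ)) ^ 4 := by positivity
  have ht1 : 1 ≤ t := le_max_left _ _
  have htn : (n : ℝ) / (1320 * (k : ℝ)) ^ 4 ≤ t := by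
    refine (Nat.le_ceil _).trans ?_
    exact Nat.cast_le.2 (le_max_right _ _)
  have hbound : 300000 * k ^ 4 * (t - 1) ≤ P.card := by
    rcases le_or_gt t 1 with h | h
    · have : t - 1 = 0 := by omega
      rw [this]; simp
    · have h2 : t - 1 < ⌈(n : ℝ) / (1320 * (k : ℝ)) ^ 4⌉₊ := by omega
      have h3 := Nat.lt_ceil.1 h2
      rw [lt_div_iff₀ hpos] at h3
      rw [hn]
      have h4 : ((300000 * k ^ 4 * (t - 1) : ℕ) : ℝ) ≤ (n : ℝ) := by
        push_cast [ht1] at h3 ⊢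
        have h5 : (0 : ℝ) ≤ (k : ℝ) ^ 4 * ((t : ℝ) - 1) := by
          have : (1 : ℝ) ≤ t := by exact_mod_cast ht1
          have : (0 : ℝ) ≤ (t : ℝ) - 1 := by linarith
          positivity
        nlinarith
      exact_mod_cast h4
  obtain ⟨X, Y, hXP, hYP, hXY, ⟨A, hA, hAd, hAc, hAv⟩, ⟨B, hB, hBd, hBc, hBv⟩⟩ :=
    fma_core P x y hx hline k t hk ht1 (by omega) hbound
  refine ⟨A, B, fun i => (hA i).trans hXP, fun i => (hB i).trans hYP, hAd, hBd, ?_,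
    fun i => htn.trans (by exact_mod_cast hAc i), fun i => htn.trans (by exact_mod_cast hBc i), ?_⟩
  · intro i j
    rw [Finset.disjoint_left]
    intro z hz hz'
    exact lt_irrefl _ (hXY z (hA i hz) z (hB j hz'))
  · intro a b ha hb
    exact ⟨fma_avoids x y P X Y hx hXP (fun a ha => Or.inl fun z hz => hXY a ha z hz) k A hA hAv a b
        ha (fun i => hB i (hb i)),
      fma_avoids x y P Y X hx hYP (fun a ha => Or.inr fun z hz => hXY z hz a ha) k B hB hBv b a
        hb (fun i => hA i (ha i))⟩
end
end

section
/- Let k ≥ 1 be an integer and let P be a set of n points in the plane in general position with n ≥ 12(40k+1)². Then the number of pairs (A, B) of disjoint subsets of P with |A| = |B| = 40k+1 such that A and B are mutually avoiding is at least C(n, 80k+2) / C(12(40k+1)², 80k+2), where C(m, r) denotes the binomial coefficient. -/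
noncomputable section

open Classical in
theorem mirsky_aux {α : Type*} (r : α → α → Prop) (ht : ∀ x y z, r x y → r y z → r x z)
    (hi : ∀ x, ¬ r x x) (b : ℕ) : ∀ (a : ℕ) (S : Finset α), a * b < S.card →
    (∃ T ⊆ S, T.card = a + 1 ∧ (∃ x ∈ T, ∀ y ∈ T, y ≠ x → r y x) ∧
      ∀ y ∈ T, ∀ z ∈ T, y ≠ z → r y z ∨ r z y) ∨
    (∃ T ⊆ S, T.card = b + 1 ∧ ∀ y ∈ T, ∀ z ∈ T, ¬ r y z) := by
  intro a
  induction a with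
  | zero =>
    intro S hS
    left
    obtain ⟨x, hx⟩ := Finset.card_pos.mp (by omega : 0 < S.card)
    refine ⟨{x}, by simpa using hx, by simp, ⟨x, by simp, ?_⟩, ?_⟩
    · intro y hy hne; simp at hy; exact absurd hy hne
    · intro y hy z hz hne; simp at hy hz; subst hy; subst hz; exact absurd rfl hne
  | succ a ih =>
    intro S hS
    set Mx := S.filter (fun x => ∀ y ∈ S, ¬ r x y) with hMx
    by_cases hc : b + 1 ≤ Mx.card
    · right
      obtain ⟨T, hT, hTc⟩ := Finset.exists_subset_card_eq hc
      refine ⟨T, hT.trans (Finset.filter_subset _ _), hTc, ?_⟩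
      intro y hy z hz
      have h1 := hT hy
      have h2 := hT hz
      simp only [hMx, Finset.mem_filter] at h1 h2
      exact h1.2 z h2.1
    · have hsub : Mx ⊆ S := Finset.filter_subset _ _
      have hcard : (S \ Mx).card = S.card - Mx.card := Finset.card_sdiff_of_subset hsub
      have hlt : a * b < (S \ Mx).card := by
        rw [hcard]
        have : (a + 1) * b = a * b + b := by ring
        omega
      rcases ih _ hlt with ⟨T, hT, hTc, ⟨x, hx, hxT⟩, hch⟩ | ⟨T, hT, hTc, h⟩
      · left
        have hxS := hT hx
        simp only [Finset.mem_sdiff, hMx, Finset.mem_filter, not_and, not_forall, not_not] at hxS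
        obtain ⟨hxS, h2⟩ := hxS
        obtain ⟨y, hyS, hxy⟩ := h2 hxS
        have hall : ∀ z ∈ T, r z y := by
          intro z hz
          by_cases hzx : z = x
          · rw [hzx]; exact hxy
          · exact ht _ _ _ (hxT z hz hzx) hxy
        have hyT : y ∉ T := fun h => hi _ (hall y h)
        refine ⟨insert y T, ?_, ?_, ⟨y, by simp, ?_⟩, ?_⟩
        · intro z hz
          rcases Finset.mem_insert.mp hz with rfl | hz
          · exact hyS
          · exact (Finset.mem_sdiff.mp (hT hz)).1
        · rw [Finset.card_insert_of_notMem hyT, hTc]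
        · intro z hz hne
          rcases Finset.mem_insert.mp hz with rfl | hz
          · exact absurd rfl hne
          · exact hall z hz
        · intro z hz w hw hne
          rcases Finset.mem_insert.mp hz with hz' | hz' <;>
          rcases Finset.mem_insert.mp hw with hw' | hw'
          · subst hz'; subst hw'; exact absurd rfl hne
          · right; subst hz'; exact hall w hw'
          · left; subst hw'; exact hall z hz'
          · exact hch z hz' w hw' hne
      · right
        exact ⟨T, hT.trans Finset.sdiff_subset, hTc, h⟩

open Classical in
theorem split_aux {α : Type*} (f : α → ℝ) : ∀ (p : ℕ) (S : Finset α), 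
    (∀ x ∈ S, ∀ y ∈ S, f x = f y → x = y) → p ≤ S.card →
    ∃ T ⊆ S, T.card = p ∧ ∀ x ∈ T, ∀ y ∈ S, y ∉ T → f x < f y := by
  intro p
  induction p with
  | zero => intro S _ _; exact ⟨∅, by simp, by simp, by simp⟩
  | succ p ih =>
    intro S hinj hp
    obtain ⟨x, hx, hmin⟩ := Finset.exists_min_image S f (Finset.card_pos.mp (by omega))
    obtain ⟨T, hT, hTc, h⟩ := ih (S.erase x)
      (fun y hy z hz => hinj y (Finset.mem_of_mem_erase hy) z (Finset.mem_of_mem_erase hz))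
      (by rw [Finset.card_erase_of_mem hx]; omega)
    have hxT : x ∉ T := fun h => by simpa using hT h
    refine ⟨insert x T, ?_, by rw [Finset.card_insert_of_notMem hxT, hTc], ?_⟩
    · intro z hz
      rcases Finset.mem_insert.mp hz with rfl | hz
      · exact hx
      · exact Finset.mem_of_mem_erase (hT hz)
    · intro z hz y hy1 hy2
      have hy : y ∈ S ∧ ¬ y = x ∧ y ∉ T := ⟨hy1, by simpa using hy2⟩
      rcases Finset.mem_insert.mp hz with rfl | hz
      · refine lt_of_le_of_ne (hmin y hy.1) (fun he => hy.2.1 ?_)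
        exact hinj _ hy.1 _ hx he.symm
      · exact h z hz y (by simp [hy.1, hy.2.1]) hy.2.2

/-- slope -/
def slp {α : Type*} (u v : α → ℝ) (p q : α) : ℝ := (v q - v p) / (u q - u p)

theorem slp_comm {α : Type*} (u v : α → ℝ) (p q : α) : slp u v p q = slp u v q p := by
  unfold slp
  rw [← neg_sub (v p), ← neg_sub (u p), neg_div_neg_eq]

/-- all points of `B` see `a`, `a'` in the same order -/
def SCmp {α : Type*} (u v : α → ℝ) (B : Finset α) (a a' : α) : Prop :=
  (∀ b ∈ B, slp u v b a < slp u v b a') ∨ (∀ b ∈ B, slp u v b a' < slp u v b a)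

theorem SCmp.symm {α : Type*} {u v : α → ℝ} {B : Finset α} {a a' : α} (h : SCmp u v B a a') :
    SCmp u v B a' a := Or.symm h

theorem SCmp.mono {α : Type*} {u v : α → ℝ} {B C : Finset α} {a a' : α} (h : SCmp u v B a a')
    (hC : C ⊆ B) : SCmp u v C a a' :=
  h.imp (fun h b hb => h b (hC hb)) (fun h b hb => h b (hC hb))

theorem slp_le_iff {α : Type*} (u v : α → ℝ) {b a a' : α} (h : 0 < (u a - u b) * (u a' - u b)) :
    slp u v b a ≤ slp u v b a' ↔
      0 ≤ (u a - u b) * (v a' - v b) - (v a - v b) * (u a' - u b) := by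
  unfold slp
  have h1 : u a - u b ≠ 0 := by rintro h0; simp [h0] at h
  have h2 : u a' - u b ≠ 0 := by rintro h0; simp [h0] at h
  rw [← sub_nonneg, div_sub_div _ _ h2 h1, div_nonneg_iff]
  have h3 : 0 < (u a' - u b) * (u a - u b) := by linarith [mul_comm (u a' - u b) (u a - u b)]
  constructor
  · rintro (⟨h, -⟩ | ⟨-, h⟩) <;> linarith
  · intro h; left; constructor <;> linarith

theorem slp_lt_iff {α : Type*} (u v : α → ℝ) {b a a' : α} (h : 0 < (u a - u b) * (u a' - u b)) :
    slp u v b a < slp u v b a' ↔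
      0 < (u a - u b) * (v a' - v b) - (v a - v b) * (u a' - u b) := by
  rw [← not_le, slp_le_iff u v (by linarith [mul_comm (u a' - u b) (u a - u b)]), not_le]
  constructor <;> intro h <;> linarith

theorem flip_aux {α : Type*} (u v : α → ℝ) (A1 A2 : Finset α) (y y' : α) (hyy : u y < u y')
    (hsep : (∀ a, (a ∈ A1 ∨ a ∈ A2) → u a < u y ∧ u a < u y') ∨ (∀ a, (a ∈ A1 ∨ a ∈ A2) → u y < u a ∧ u y' < u a))
    (h12 : ∀ a ∈ A1, ∀ a' ∈ A2, slp u v y a < slp u v y a') :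
    SCmp u v A1 y y' ∨ SCmp u v A2 y y' := by
  by_contra hcon
  unfold SCmp at hcon
  push Not at hcon
  obtain ⟨⟨⟨p, hp, hp'⟩, ⟨q, hq, hq'⟩⟩, ⟨⟨r, hr, hr'⟩, ⟨s, hs, hs'⟩⟩⟩ := hcon
  rcases hsep with hsep | hsep
  · have a1 := hsep p (Or.inl hp)
    have a2 := hsep s (Or.inr hs)
    rw [slp_le_iff _ _ (by nlinarith)] at hp' hs'
    have := h12 p hp s hs
    rw [slp_lt_iff _ _ (by nlinarith)] at this
    nlinarith
  · have a1 := hsep q (Or.inl hq)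
    have a2 := hsep r (Or.inr hr)
    rw [slp_le_iff _ _ (by nlinarith)] at hq' hr'
    have := h12 q hq r hr
    rw [slp_lt_iff _ _ (by nlinarith)] at this
    nlinarith

open Classical in
theorem main_flip {α : Type*} (u v : α → ℝ) (m : ℕ) (hm : 1 ≤ m) (T Y : Finset α)
    (hT : T.card = 2 * m) (hY : (m - 1) * (m - 1) < Y.card)
    (hinj : ∀ x ∈ Y, ∀ y ∈ Y, u x = u y → x = y)
    (hsep : (∀ a ∈ T, ∀ y ∈ Y, u a < u y) ∨ (∀ a ∈ T, ∀ y ∈ Y, u y < u a))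
    (hch : ∀ a ∈ T, ∀ a' ∈ T, a ≠ a' → SCmp u v Y a a') :
    ∃ A ⊆ T, ∃ B ⊆ Y, A.card = m ∧ B.card = m ∧
      (∀ a ∈ A, ∀ a' ∈ A, a ≠ a' → SCmp u v B a a') ∧
      (∀ b ∈ B, ∀ b' ∈ B, b ≠ b' → SCmp u v A b b') := by
  obtain ⟨y0, hy0⟩ := Finset.card_pos.mp (by omega : 0 < Y.card)
  obtain ⟨A1, hA1, hA1c, hsp⟩ := split_aux (slp u v y0) m T (by
    intro x hx y hy he
    by_contra hne
    rcases hch x hx y hy hne with h | h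
    · exact absurd he (h y0 hy0).ne
    · exact absurd he (h y0 hy0).ne') (by omega)
  set A2 := T \ A1 with hA2
  have hA2T : A2 ⊆ T := Finset.sdiff_subset
  have hA2c : A2.card = m := by
    rw [hA2, Finset.card_sdiff_of_subset hA1]; omega
  have h12 : ∀ y ∈ Y, ∀ a ∈ A1, ∀ a' ∈ A2, slp u v y a < slp u v y a' := by
    intro y hy a ha a' ha'
    have h0 := hsp a ha a' (hA2T ha') (Finset.mem_sdiff.mp ha').2
    rcases hch a (hA1 ha) a' (hA2T ha') (by rintro rfl; exact lt_irrefl _ h0) with h | h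
    · exact h y hy
    · exact absurd (h y0 hy0) h0.not_gt
  have hdich : ∀ y ∈ Y, ∀ y' ∈ Y, y ≠ y' → SCmp u v A1 y y' ∨ SCmp u v A2 y y' := by
    have key : ∀ y ∈ Y, ∀ y' ∈ Y, u y < u y' → SCmp u v A1 y y' ∨ SCmp u v A2 y y' := by
      intro y hy y' hy' hlt
      refine flip_aux u v A1 A2 y y' hlt ?_ (h12 y hy)
      refine hsep.imp ?_ ?_ <;> intro h a ha <;>
      · have : a ∈ T := ha.elim (fun h => hA1 h) (fun h => hA2T h)
        exact ⟨h a this y hy, h a this y' hy'⟩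
    intro y hy y' hy' hne
    rcases lt_trichotomy (u y) (u y') with h | h | h
    · exact key y hy y' hy' h
    · exact absurd (hinj y hy y' hy' h) hne
    · exact (key y' hy' y hy h).imp SCmp.symm SCmp.symm
  obtain ⟨a0, ha0⟩ := Finset.card_pos.mp (by omega : 0 < A1.card)
  rcases mirsky_aux (fun y y' => ∀ a ∈ A1, slp u v a y < slp u v a y')
    (fun x y z h1 h2 a ha => (h1 a ha).trans (h2 a ha))
    (fun x h => lt_irrefl _ (h a0 ha0)) (m - 1) (m - 1) Y hY with
    ⟨B, hB, hBc, -, h⟩ | ⟨B, hB, hBc, h⟩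
  · refine ⟨A1, hA1, B, hB, hA1c, by omega, ?_, ?_⟩
    · intro a ha a' ha' hne
      exact (hch a (hA1 ha) a' (hA1 ha') hne).mono hB
    · exact h
  · refine ⟨A2, hA2T, B, hB, hA2c, by omega, ?_, ?_⟩
    · intro a ha a' ha' hne
      exact (hch a (hA2T ha) a' (hA2T ha') hne).mono hB
    · intro b hb b' hb' hne
      rcases hdich b (hB hb) b' (hB hb') hne with h' | h'
      · rcases h' with h' | h'
        · exact absurd h' (h b hb b' hb')
        · exact absurd h' (h b' hb' b hb)
      · exact h'

theorem exists_pt {α : Type*} (u v : α → ℝ) (Y : Finset α) (a a' : α)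
    (hsep : ∀ y ∈ Y, 0 < (u a - u y) * (u a' - u y)) (h : ¬ SCmp u v Y a a') :
    ∃ pu pv : ℝ, (u a' - u a) * (pv - v a) = (v a' - v a) * (pu - u a) ∧
      (∀ c d e : ℝ, (∀ y ∈ Y, 0 < c * u y + d * v y + e) → 0 < c * pu + d * pv + e) ∧
      (∀ c d e : ℝ, (∀ y ∈ Y, 0 ≤ c * u y + d * v y + e) → 0 ≤ c * pu + d * pv + e) := by
  unfold SCmp at h
  push Not at h
  obtain ⟨⟨p, hp, hp'⟩, ⟨q, hq, hq'⟩⟩ := h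
  rw [slp_le_iff _ _ (by linarith [hsep p hp, mul_comm (u a - u p) (u a' - u p)])] at hp'
  rw [slp_le_iff _ _ (by linarith [hsep q hq, mul_comm (u a - u q) (u a' - u q)])] at hq'
  set H : α → ℝ := fun y => (u a' - u a) * (v y - v a) - (v a' - v a) * (u y - u a) with hH
  have h1 : H p ≤ 0 := by simp only [hH]; linarith
  have h2 : 0 ≤ H q := by simp only [hH]; linarith
  obtain ⟨w, hw0, hw1, hw⟩ : ∃ w : ℝ, 0 ≤ w ∧ w ≤ 1 ∧ (1 - w) * H p + w * H q = 0 := by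
    by_cases h0 : H q - H p = 0
    · exact ⟨0, le_rfl, zero_le_one, by linarith⟩
    · have : 0 < H q - H p := lt_of_le_of_ne (by linarith) (Ne.symm h0)
      refine ⟨-H p / (H q - H p), div_nonneg (by linarith) this.le, ?_, ?_⟩
      · rw [div_le_one this]; linarith
      · field_simp; ring
  refine ⟨(1 - w) * u p + w * u q, (1 - w) * v p + w * v q, ?_, ?_, ?_⟩
  · simp only [hH] at hw; linarith
  · intro c d e hpos
    have e1 := hpos p hp
    have e2 := hpos q hq
    have : c * ((1 - w) * u p + w * u q) + d * ((1 - w) * v p + w * v q) + e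
      = (1 - w) * (c * u p + d * v p + e) + w * (c * u q + d * v q + e) := by ring
    rw [this]
    rcases hw0.eq_or_lt with rfl | hw0
    · simpa using e1
    · have := mul_pos hw0 e2
      have := mul_nonneg (by linarith : 0 ≤ 1 - w) e1.le
      linarith
  · intro c d e hpos
    have e1 := hpos p hp
    have e2 := hpos q hq
    have : c * ((1 - w) * u p + w * u q) + d * ((1 - w) * v p + w * v q) + e
      = (1 - w) * (c * u p + d * v p + e) + w * (c * u q + d * v q + e) := by ring
    rw [this]
    have := mul_nonneg hw0 e2
    have := mul_nonneg (by linarith : 0 ≤ 1 - w) e1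
    linarith

theorem line_aux (ua va ua' va' s t τ u0 v0 u1 v1 u2 v2 : ℝ) (hne : ua' - ua ≠ 0)
    (h0 : (ua' - ua) * (v0 - va) = (va' - va) * (u0 - ua))
    (h1 : (ua' - ua) * (v1 - va) = (va' - va) * (u1 - ua))
    (h2 : (ua' - ua) * (v2 - va) = (va' - va) * (u2 - ua))
    (h01 : u0 < u1) (h12 : u1 < u2)
    (g0 : 0 ≤ (τ * s) * u0 + (-τ) * v0 + τ * t)
    (g1 : 0 < (-τ * s) * u1 + τ * v1 + (-τ * t))
    (g2 : 0 ≤ (τ * s) * u2 + (-τ) * v2 + τ * t) : False := by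
  have e : ∀ x y : ℝ, (ua' - ua) * (y - va) = (va' - va) * (x - ua) →
      y = va + (va' - va) / (ua' - ua) * (x - ua) := by
    intro x y h
    field_simp
    linarith
  have e0 := e _ _ h0
  have e1 := e _ _ h1
  have e2 := e _ _ h2
  set κ := (va' - va) / (ua' - ua)
  subst e0 e1 e2
  have := mul_nonneg g0 (by linarith : 0 ≤ u2 - u1)
  have := mul_nonneg g2 (by linarith : 0 ≤ u1 - u0)
  have := mul_pos g1 (by linarith : 0 < u2 - u0)
  linarith

/-- combinatorial core -/
theorem core {α : Type*} (u v : α → ℝ) (m : ℕ) (hm : 1 ≤ m) (L M R : Finset α)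
    (hL : 2 * m ^ 2 ≤ L.card) (hM : 2 * m ^ 2 ≤ M.card) (hR : 2 * m ^ 2 ≤ R.card)
    (iL : ∀ x ∈ L, ∀ y ∈ L, u x = u y → x = y) (iM : ∀ x ∈ M, ∀ y ∈ M, u x = u y → x = y)
    (iR : ∀ x ∈ R, ∀ y ∈ R, u x = u y → x = y)
    (hLM : ∀ x ∈ L, ∀ y ∈ M, u x < u y) (hMR : ∀ x ∈ M, ∀ y ∈ R, u x < u y)
    (s t τ : ℝ)
    (gL : ∀ x ∈ L, 0 ≤ (τ * s) * u x + (-τ) * v x + τ * t)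
    (gM : ∀ x ∈ M, 0 < (-τ * s) * u x + τ * v x + (-τ * t))
    (gR : ∀ x ∈ R, 0 ≤ (τ * s) * u x + (-τ) * v x + τ * t) :
    ∃ A B : Finset α, (A ⊆ L ∨ A ⊆ M ∨ A ⊆ R) ∧ (B ⊆ L ∨ B ⊆ M ∨ B ⊆ R) ∧
      ((∀ x ∈ A, ∀ y ∈ B, u x < u y) ∨ (∀ x ∈ A, ∀ y ∈ B, u y < u x)) ∧
      A.card = m ∧ B.card = m ∧
      (∀ a ∈ A, ∀ a' ∈ A, a ≠ a' → SCmp u v B a a') ∧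
      (∀ b ∈ B, ∀ b' ∈ B, b ≠ b' → SCmp u v A b b') := by
  obtain ⟨j, rfl⟩ : ∃ j, m = j + 1 := ⟨m - 1, by omega⟩
  have c1 : (2 * (j + 1) - 1) * j < 2 * (j + 1) ^ 2 := by
    have : 2 * (j + 1) - 1 = 2 * j + 1 := by omega
    rw [this]; nlinarith
  have c2 : (j + 1 - 1) * (j + 1 - 1) < 2 * (j + 1) ^ 2 := by
    simp only [Nat.add_sub_cancel]; nlinarith
  obtain ⟨q0, hq0⟩ := Finset.card_pos.mp (by omega : 0 < M.card)
  have hLR : ∀ x ∈ L, ∀ y ∈ R, u x < u y := fun x hx y hy => (hLM x hx q0 hq0).trans (hMR q0 hq0 y hy)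
  have dL : ∀ a ∈ L, ∀ a' ∈ L, a ≠ a' → SCmp u v M a a' ∨ SCmp u v R a a' := by
    intro a ha a' ha' hne
    by_contra hcon
    push Not at hcon
    obtain ⟨p, p', hp, hp1, hp2⟩ := exists_pt u v M a a' (fun y hy => mul_pos_of_neg_of_neg
      (by linarith [hLM a ha y hy]) (by linarith [hLM a' ha' y hy])) hcon.1
    obtain ⟨q, q', hq, hq1, hq2⟩ := exists_pt u v R a a' (fun y hy => mul_pos_of_neg_of_neg
      (by linarith [hLR a ha y hy]) (by linarith [hLR a' ha' y hy])) hcon.2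
    refine line_aux (u a) (v a) (u a') (v a') s t τ (u a) (v a) p p' q q' ?_ (by ring) hp hq ?_ ?_
      (gL a ha) (hp1 _ _ _ gM) (hq2 _ _ _ gR)
    · intro h; exact hne (iL a ha a' ha' (by linarith))
    · have := hp1 1 0 (- u a) (fun y hy => by linarith [hLM a ha y hy]); linarith
    · have := hq1 1 0 (-p) (fun y hy => by
        have := hp1 (-1) 0 (u y) (fun z hz => by linarith [hMR z hz y hy]); linarith)
      linarith
  have dR : ∀ a ∈ R, ∀ a' ∈ R, a ≠ a' → SCmp u v M a a' ∨ SCmp u v L a a' := by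
    intro a ha a' ha' hne
    by_contra hcon
    push Not at hcon
    obtain ⟨p, p', hp, hp1, hp2⟩ := exists_pt u v M a a' (fun y hy => mul_pos
      (by linarith [hMR y hy a ha]) (by linarith [hMR y hy a' ha'])) hcon.1
    obtain ⟨q, q', hq, hq1, hq2⟩ := exists_pt u v L a a' (fun y hy => mul_pos
      (by linarith [hLR y hy a ha]) (by linarith [hLR y hy a' ha'])) hcon.2
    refine line_aux (u a) (v a) (u a') (v a') s t τ q q' p p' (u a) (v a) ?_ hq hp (by ring) ?_ ?_
      (hq2 _ _ _ gL) (hp1 _ _ _ gM) (gR a ha)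
    · intro h; exact hne (iR a ha a' ha' (by linarith))
    · have := hq1 (-1) 0 p (fun y hy => by
        have := hp1 1 0 (-u y) (fun z hz => by linarith [hLM y hy z hz]); linarith)
      linarith
    · have := hp1 (-1) 0 (u a) (fun y hy => by linarith [hMR y hy a ha]); linarith
  have trans' : ∀ x y z, (∀ b ∈ M, slp u v b x < slp u v b y) → (∀ b ∈ M, slp u v b y < slp u v b z) →
      ∀ b ∈ M, slp u v b x < slp u v b z := fun x y z h1 h2 b hb => (h1 b hb).trans (h2 b hb)
  have irr : ∀ x, ¬ ∀ b ∈ M, slp u v b x < slp u v b x := fun x h => lt_irrefl _ (h q0 hq0)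
  rcases mirsky_aux _ trans' irr j (2 * (j + 1) - 1) L (by omega) with
    ⟨T, hT, hTc, -, hch⟩ | ⟨A, hA, hAc, hAa⟩
  · obtain ⟨A, hA, B, hB, h1, h2, h3, h4⟩ := main_flip u v (j + 1) hm T M (by omega) (by omega) iM
      (Or.inl fun a ha y hy => hLM a (hT ha) y hy) hch
    exact ⟨A, B, Or.inl (hA.trans hT), Or.inr (Or.inl hB),
      Or.inl fun x hx y hy => hLM x (hT (hA hx)) y (hB hy), h1, h2, h3, h4⟩
  rcases mirsky_aux _ trans' irr j (2 * (j + 1) - 1) R (by omega) with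
    ⟨T, hT, hTc, -, hch⟩ | ⟨B, hB, hBc, hBa⟩
  · obtain ⟨A, hA, B, hB, h1, h2, h3, h4⟩ := main_flip u v (j + 1) hm T M (by omega) (by omega) iM
      (Or.inr fun a ha y hy => hMR y hy a (hT ha)) hch
    exact ⟨A, B, Or.inr (Or.inr (hA.trans hT)), Or.inr (Or.inl hB),
      Or.inr fun x hx y hy => hMR y (hB hy) x (hT (hA hx)), h1, h2, h3, h4⟩
  refine ⟨A, B, Or.inl hA, Or.inr (Or.inr hB), Or.inl fun x hx y hy => hLR x (hA hx) y (hB hy),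
    hAc, hBc, ?_, ?_⟩
  · intro a ha a' ha' hne
    rcases dL a (hA ha) a' (hA ha') hne with h | h
    · rcases h with h | h
      · exact absurd h (hAa a ha a' ha')
      · exact absurd h (hAa a' ha' a ha)
    · exact h.mono hB
  · intro a ha a' ha' hne
    rcases dR a (hB ha) a' (hB ha') hne with h | h
    · rcases h with h | h
      · exact absurd h (hBa a ha a' ha')
      · exact absurd h (hBa a' ha' a ha)
    · exact h.mono hA

open Classical in
theorem median_aux {α : Type*} (u v : α → ℝ) (l : ℕ) (hl : 1 ≤ l) (L : Finset α)
    (hL : 2 * l ≤ L.card) : ∃ F : ℝ → ℝ, Continuous F ∧ ∀ s,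
      (∃ p ∈ L, F s = v p - s * u p) ∧
      l ≤ (L.filter (fun p => F s ≤ v p - s * u p)).card ∧
      l ≤ (L.filter (fun p => v p - s * u p ≤ F s)).card := by
  have hne : (Finset.powersetCard l L).Nonempty :=
    Finset.powersetCard_nonempty.mpr (by omega)
  set g : Finset α → ℝ → ℝ := fun S s =>
    if h : S.Nonempty then S.inf' h (fun p => v p - s * u p) else 0 with hg
  have hgS : ∀ S ∈ Finset.powersetCard l L, ∃ h : S.Nonempty, S ⊆ L ∧ S.card = l ∧
      ∀ s, g S s = S.inf' h (fun p => v p - s * u p) := by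
    intro S hS
    rw [Finset.mem_powersetCard] at hS
    have h : S.Nonempty := Finset.card_pos.mp (by omega)
    exact ⟨h, hS.1, hS.2, fun s => by simp only [hg, dif_pos h]⟩
  refine ⟨fun s => (Finset.powersetCard l L).sup' hne (fun S => g S s), ?_, ?_⟩
  · apply Continuous.finset_sup'_apply
    intro S hS
    obtain ⟨h, -, -, he⟩ := hgS S hS
    have : g S = fun s => S.inf' h (fun p => v p - s * u p) := funext he
    rw [this]
    apply Continuous.finset_inf'_apply
    intro p hp
    fun_prop
  · intro s
    obtain ⟨S, hS, hSe⟩ := Finset.exists_mem_eq_sup' hne (fun S => g S s)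
    obtain ⟨h, hSL, hSc, he⟩ := hgS S hS
    obtain ⟨p, hp, hpe⟩ := Finset.exists_mem_eq_inf' h (fun p => v p - s * u p)
    simp only
    refine ⟨⟨p, hSL hp, by rw [hSe, he, hpe]⟩, ?_, ?_⟩
    · refine hSc.symm.le.trans (Finset.card_le_card ?_)
      intro q hq
      rw [Finset.mem_filter]
      refine ⟨hSL hq, ?_⟩
      rw [hSe, he]
      exact Finset.inf'_le (fun p => v p - s * u p) hq
    · set t := (Finset.powersetCard l L).sup' hne (fun S => g S s) with ht
      have hsum := Finset.card_filter_add_card_filter_not (s := L) (fun p => v p - s * u p ≤ t)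
      by_contra hcon
      have : l ≤ (L.filter (fun p => ¬ (v p - s * u p ≤ t))).card := by omega
      obtain ⟨S', hS', hS'c⟩ := Finset.exists_subset_card_eq this
      have hm : S' ∈ Finset.powersetCard l L :=
        Finset.mem_powersetCard.mpr ⟨hS'.trans (Finset.filter_subset _ _), hS'c⟩
      obtain ⟨h', -, -, he'⟩ := hgS S' hm
      have h1 : g S' s ≤ t := Finset.le_sup' (fun S => g S s) hm
      obtain ⟨p', hp', hpe'⟩ := Finset.exists_mem_eq_inf' h' (fun p => v p - s * u p)
      rw [he', hpe'] at h1
      exact (Finset.mem_filter.mp (hS' hp')).2 h1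

open Classical in
theorem ham_aux {α : Type*} (u v : α → ℝ) (l : ℕ) (hl : 1 ≤ l) (L R : Finset α)
    (hL : 2 * l ≤ L.card) (hR : 2 * l ≤ R.card) (hLR : ∀ x ∈ L, ∀ y ∈ R, u x < u y) :
    ∃ s t : ℝ, (∃ p ∈ L, t = v p - s * u p) ∧ (∃ p ∈ R, t = v p - s * u p) ∧
      l ≤ (L.filter (fun p => t ≤ v p - s * u p)).card ∧
      l ≤ (L.filter (fun p => v p - s * u p ≤ t)).card ∧
      l ≤ (R.filter (fun p => t ≤ v p - s * u p)).card ∧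
      l ≤ (R.filter (fun p => v p - s * u p ≤ t)).card := by
  obtain ⟨F, hF, hF'⟩ := median_aux u v l hl L hL
  obtain ⟨G, hG, hG'⟩ := median_aux u v l hl R hR
  have hbd : ∃ K : ℝ, ∀ x ∈ L, ∀ y ∈ R, |(v y - v x) / (u y - u x)| ≤ K := by
    obtain ⟨K, hK⟩ := ((L ×ˢ R).image
      (fun z => |(v z.2 - v z.1) / (u z.2 - u z.1)|)).bddAbove
    refine ⟨K, fun x hx y hy => hK ?_⟩
    rw [Finset.mem_coe, Finset.mem_image]
    exact ⟨(x, y), Finset.mem_product.mpr ⟨hx, hy⟩, rfl⟩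
  obtain ⟨K, hK⟩ := hbd
  have hr : (0 : ℝ) ∈ Set.range (F - G) := by
    apply mem_range_of_exists_le_of_exists_ge (hF.sub hG)
    · refine ⟨-K, ?_⟩
      obtain ⟨⟨p, hp, hpe⟩, -⟩ := hF' (-K)
      obtain ⟨⟨q, hq, hqe⟩, -⟩ := hG' (-K)
      have h1 := (abs_le.mp (hK p hp q hq)).1
      have h2 := hLR p hp q hq
      rw [le_div_iff₀ (by linarith)] at h1
      rw [Pi.sub_apply, hpe, hqe]; linarith
    · refine ⟨K, ?_⟩
      obtain ⟨⟨p, hp, hpe⟩, -⟩ := hF' K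
      obtain ⟨⟨q, hq, hqe⟩, -⟩ := hG' K
      have h1 := (abs_le.mp (hK p hp q hq)).2
      have h2 := hLR p hp q hq
      rw [div_le_iff₀ (by linarith)] at h1
      rw [Pi.sub_apply, hpe, hqe]; linarith
  obtain ⟨s, hs⟩ := hr
  have hs' : G s = F s := by rw [Pi.sub_apply] at hs; linarith
  obtain ⟨a1, a2, a3⟩ := hF' s
  obtain ⟨b1, b2, b3⟩ := hG' s
  rw [hs'] at b1
  simp only [hs'] at b2 b3
  exact ⟨s, F s, a1, b1, a2, a3, b2, b3⟩

theorem avoids_of_SCmp (c : ℝ) (A B : Finset Plane)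
    (hsep : (∀ x ∈ A, ∀ y ∈ B, x 0 + c * x 1 < y 0 + c * y 1) ∨
      (∀ x ∈ A, ∀ y ∈ B, y 0 + c * y 1 < x 0 + c * x 1))
    (h : ∀ a ∈ A, ∀ a' ∈ A, a ≠ a' →
      SCmp (fun p : Plane => p 0 + c * p 1) (fun p : Plane => p 1) B a a') :
    Avoids2 (A : Set Plane) (B : Set Plane) := by
  have key : ∀ a ∈ A, ∀ a' ∈ A, (∀ b ∈ B, slp (fun p : Plane => p 0 + c * p 1)
      (fun p : Plane => p 1) b a < slp (fun p : Plane => p 0 + c * p 1) (fun p : Plane => p 1) b a') →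
      Disjoint ((affineSpan ℝ ({a, a'} : Set Plane) : AffineSubspace ℝ Plane) : Set Plane)
      (convexHull ℝ (B : Set Plane)) := by
    intro a ha a' ha' hb
    have hsub : convexHull ℝ (B : Set Plane) ⊆
        {p : Plane | 0 < (a' 0 - a 0) * (p 1 - a 1) - (a' 1 - a 1) * (p 0 - a 0)} := by
      apply convexHull_min
      · intro b hbB
        have h1 := hb b hbB
        rw [slp_lt_iff _ _ (by
          rcases hsep with hs | hs
          · exact mul_pos_of_neg_of_neg (by linarith [hs a ha b hbB]) (by linarith [hs a' ha' b hbB])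
          · exact mul_pos (by linarith [hs a ha b hbB]) (by linarith [hs a' ha' b hbB]))] at h1
        simp only [Set.mem_ofPred_eq]
        linarith
      · intro x hx y hy α β hα hβ hab
        simp only [Set.mem_ofPred_eq, PiLp.add_apply, PiLp.smul_apply, smul_eq_mul] at hx hy ⊢
        have e : (a' 0 - a 0) * (α * x 1 + β * y 1 - a 1) - (a' 1 - a 1) * (α * x 0 + β * y 0 - a 0)
          = α * ((a' 0 - a 0) * (x 1 - a 1) - (a' 1 - a 1) * (x 0 - a 0)) +
            β * ((a' 0 - a 0) * (y 1 - a 1) - (a' 1 - a 1) * (y 0 - a 0)) := by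
          have : α = 1 - β := by linarith
          subst this; ring
        rw [e]
        rcases hα.eq_or_lt with rfl | hα
        · have : β = 1 := by linarith
          subst this; linarith
        · have := mul_pos hα hx
          have := mul_nonneg hβ hy.le
          linarith
    rw [Set.disjoint_left]
    intro p hp hpB
    have h2 := hsub hpB
    rw [SetLike.mem_coe, mem_affineSpan_pair_iff_exists_lineMap_eq] at hp
    obtain ⟨r, rfl⟩ := hp
    simp only [Set.mem_ofPred_eq, AffineMap.lineMap_apply, vsub_eq_sub, vadd_eq_add, PiLp.add_apply,
      PiLp.smul_apply, PiLp.sub_apply, smul_eq_mul] at h2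
    linarith
  intro a ha a' ha' hne
  rcases h a ha a' ha' hne with h' | h'
  · exact key a ha a' ha' h'
  · rw [Set.pair_comm]; exact key a' ha' a ha h'

open Classical in
theorem exists_pair (m : ℕ) (hm : 1 ≤ m) (P : Finset Plane) (hgp : GenPos2 (P : Set Plane))
    (hP : P.card = 12 * m ^ 2) : ∃ A ⊆ P, ∃ B ⊆ P, Disjoint A B ∧ A.card = m ∧ B.card = m ∧
      MutuallyAvoiding2 (A : Set Plane) (B : Set Plane) := by
  obtain ⟨c, hc⟩ := Infinite.exists_notMem_finset ((P ×ˢ P).image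
    (fun z : Plane × Plane => (z.1 0 - z.2 0) / (z.2 1 - z.1 1)))
  set u : Plane → ℝ := fun p => p 0 + c * p 1 with hu
  set v : Plane → ℝ := fun p => p 1 with hv
  have inj : ∀ x ∈ P, ∀ y ∈ P, u x = u y → x = y := by
    intro x hx y hy he
    simp only [hu] at he
    by_cases h1 : y 1 - x 1 = 0
    · have h2 : y 1 = x 1 := by linarith
      rw [h2] at he
      ext i
      fin_cases i
      · simpa using he
      · exact h2.symm
    · exfalso
      apply hc
      rw [Finset.mem_image]
      refine ⟨(x, y), Finset.mem_product.mpr ⟨hx, hy⟩, ?_⟩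
      simp only
      rw [div_eq_iff h1]
      linarith
  obtain ⟨L, hL, hLc, hLs⟩ := split_aux u (4 * m ^ 2) P inj (by omega)
  have hLc' : (P \ L).card = 8 * m ^ 2 := by
    rw [Finset.card_sdiff_of_subset hL]; omega
  obtain ⟨M, hM, hMc, hMs⟩ := split_aux u (4 * m ^ 2) (P \ L)
    (fun x hx y hy => inj x (Finset.sdiff_subset hx) y (Finset.sdiff_subset hy)) (by omega)
  set R := (P \ L) \ M with hR
  have hRc : R.card = 4 * m ^ 2 := by
    rw [hR, Finset.card_sdiff_of_subset hM]; omega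
  have hMP : M ⊆ P := hM.trans Finset.sdiff_subset
  have hRP : R ⊆ P := Finset.sdiff_subset.trans Finset.sdiff_subset
  have hLM : ∀ x ∈ L, ∀ y ∈ M, u x < u y := fun x hx y hy => hLs x hx y (hMP hy) (Finset.mem_sdiff.mp (hM hy)).2
  have hLR : ∀ x ∈ L, ∀ y ∈ R, u x < u y := fun x hx y hy => hLs x hx y (hRP hy)
      (Finset.mem_sdiff.mp (Finset.mem_sdiff.mp hy).1).2
  have hMR : ∀ x ∈ M, ∀ y ∈ R, u x < u y := fun x hx y hy =>
    hMs x hx y (Finset.mem_sdiff.mp hy).1 (Finset.mem_sdiff.mp hy).2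
  have hm2 : 1 ≤ m ^ 2 := Nat.one_le_pow _ _ hm
  obtain ⟨s, t, ⟨p, hp, hpe⟩, ⟨q, hq, hqe⟩, f1, f2, f3, f4⟩ :=
    ham_aux u v (2 * m ^ 2) (by omega) L R (by omega) (by omega) hLR
  have hMne : ∀ w ∈ M, v w - s * u w ≠ t := by
    intro w hw hwe
    have h1 := hLM p hp w hw
    have h2 := hMR w hw q hq
    refine hgp p (hL hp) w (hMP hw) q (hRP hq) ?_ ?_ ?_ ?_
    · rintro rfl; exact lt_irrefl _ h1
    · rintro rfl; exact lt_asymm h1 h2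
    · rintro rfl; exact lt_irrefl _ h2
    · have hd : u q - u p ≠ 0 := by linarith
      have hwl : w = AffineMap.lineMap p q ((u w - u p) / (u q - u p)) := by
        set k := (u w - u p) / (u q - u p) with hk
        have hk' : k * (u q - u p) = u w - u p := by rw [hk]; field_simp
        have e1 : w 1 = k * (q 1 - p 1) + p 1 := by
          simp only [hu, hv] at hwe hpe hqe hk'
          linear_combination s * (-hk') + hwe + hpe + k * (hqe - hpe) 
        have e0 : w 0 = k * (q 0 - p 0) + p 0 := by
          simp only [hu] at hk'
          linear_combination -hk' - c * e1
        ext i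
        fin_cases i
        · simpa [AffineMap.lineMap_apply] using e0
        · simpa [AffineMap.lineMap_apply] using e1
      have hmem : w ∈ affineSpan ℝ ({p, q} : Set Plane) :=
        mem_affineSpan_pair_iff_exists_lineMap_eq.mpr ⟨_, hwl.symm⟩
      have := collinear_insert_of_mem_affineSpan_pair hmem
      rwa [Set.insert_comm] at this
  have hfin : ∃ (τ : ℝ) (L' M' R' : Finset Plane), L' ⊆ L ∧ M' ⊆ M ∧ R' ⊆ R ∧
      2 * m ^ 2 ≤ L'.card ∧ 2 * m ^ 2 ≤ M'.card ∧ 2 * m ^ 2 ≤ R'.card ∧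
      (∀ x ∈ L', 0 ≤ (τ * s) * u x + (-τ) * v x + τ * t) ∧
      (∀ x ∈ M', 0 < (-τ * s) * u x + τ * v x + (-τ * t)) ∧
      (∀ x ∈ R', 0 ≤ (τ * s) * u x + (-τ) * v x + τ * t) := by
    have hsum := Finset.card_filter_add_card_filter_not (s := M) (fun p => v p - s * u p ≤ t)
    by_cases hc : 2 * m ^ 2 ≤ (M.filter (fun p => v p - s * u p ≤ t)).card
    · refine ⟨-1, _, _, _, Finset.filter_subset _ _, Finset.filter_subset _ _,
        Finset.filter_subset _ _, f1, hc, f3, ?_, ?_, ?_⟩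
      · intro x hx; have := (Finset.mem_filter.mp hx).2; linarith
      · intro x hx
        have h1 := Finset.mem_filter.mp hx
        have := lt_of_le_of_ne h1.2 (hMne x h1.1)
        linarith
      · intro x hx; have := (Finset.mem_filter.mp hx).2; linarith
    · refine ⟨1, _, _, _, Finset.filter_subset _ _, Finset.filter_subset (fun p => ¬ (v p - s * u p ≤ t)) M,
        Finset.filter_subset _ _, f2, by omega, f4, ?_, ?_, ?_⟩
      · intro x hx; have := (Finset.mem_filter.mp hx).2; linarith
      · intro x hx
        have h1 := (Finset.mem_filter.mp hx).2
        rw [not_le] at h1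
        linarith
      · intro x hx; have := (Finset.mem_filter.mp hx).2; linarith
  obtain ⟨τ, L', M', R', hL', hM', hR', c1, c2, c3, g1, g2, g3⟩ := hfin
  obtain ⟨A, B, hA, hB, hsep, hAc, hBc, hAB, hBA⟩ := core u v m hm L' M' R' c1 c2 c3
    (fun x hx y hy => inj x (hL (hL' hx)) y (hL (hL' hy)))
    (fun x hx y hy => inj x (hMP (hM' hx)) y (hMP (hM' hy)))
    (fun x hx y hy => inj x (hRP (hR' hx)) y (hRP (hR' hy)))
    (fun x hx y hy => hLM x (hL' hx) y (hM' hy))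
    (fun x hx y hy => hMR x (hM' hx) y (hR' hy)) s t τ g1 g2 g3
  have hsubP : ∀ X : Finset Plane, (X ⊆ L' ∨ X ⊆ M' ∨ X ⊆ R') → X ⊆ P := by
    rintro X (h | h | h)
    · exact h.trans (hL'.trans hL)
    · exact h.trans (hM'.trans hMP)
    · exact h.trans (hR'.trans hRP)
  refine ⟨A, hsubP A hA, B, hsubP B hB, ?_, hAc, hBc, ?_, ?_⟩
  · rw [Finset.disjoint_left]
    intro x hx hx'
    rcases hsep with h | h <;> exact lt_irrefl _ (h x hx x hx')
  · exact avoids_of_SCmp c A B hsep hAB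
  · exact avoids_of_SCmp c B A (hsep.symm.imp (fun h x hx y hy => h y hy x hx)
      (fun h x hx y hy => h y hy x hx)) hBA

/-- Counting pairs of mutually avoiding subsets of size `40k+1`. -/
theorem many_mutually_avoiding_pairs (k : ℕ) (hk : 1 ≤ k) (P : Finset Plane) (n : ℕ)
    (hn : P.card = n) (hgp : GenPos2 (P : Set Plane))
    (hbig : 12 * (40 * k + 1) ^ 2 ≤ n) :
    ((n.choose (80 * k + 2) : ℝ) / ((12 * (40 * k + 1) ^ 2).choose (80 * k + 2) : ℝ)) ≤
      (Nat.card {AB : Finset Plane × Finset Plane //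
        AB.1 ⊆ P ∧ AB.2 ⊆ P ∧ Disjoint AB.1 AB.2 ∧
        AB.1.card = 40 * k + 1 ∧ AB.2.card = 40 * k + 1 ∧
        MutuallyAvoiding2 (AB.1 : Set Plane) (AB.2 : Set Plane)} : ℝ) := by
  classical
  set m := 40 * k + 1 with hm
  have h2m : 80 * k + 2 = 2 * m := by omega
  rw [h2m]
  set N := 12 * m ^ 2 with hN
  have hmN : 2 * m ≤ N := by nlinarith
  set Q := (P.powerset ×ˢ P.powerset).filter (fun AB : Finset Plane × Finset Plane =>
        AB.1 ⊆ P ∧ AB.2 ⊆ P ∧ Disjoint AB.1 AB.2 ∧ AB.1.card = m ∧ AB.2.card = m ∧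
        MutuallyAvoiding2 (AB.1 : Set Plane) (AB.2 : Set Plane)) with hQ
  have hcard : Nat.card {AB : Finset Plane × Finset Plane //
        AB.1 ⊆ P ∧ AB.2 ⊆ P ∧ Disjoint AB.1 AB.2 ∧ AB.1.card = m ∧ AB.2.card = m ∧
        MutuallyAvoiding2 (AB.1 : Set Plane) (AB.2 : Set Plane)} = Q.card := by
    refine Nat.subtype_card Q ?_
    intro AB
    rw [hQ, Finset.mem_filter, Finset.mem_product, Finset.mem_powerset, Finset.mem_powerset]
    tauto
  rw [hcard]
  have hcover : Finset.powersetCard N P ⊆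
      Q.biUnion (fun AB => (Finset.powersetCard N P).filter (fun S => AB.1 ∪ AB.2 ⊆ S)) := by
    intro S hS
    have hS' := Finset.mem_powersetCard.mp hS
    obtain ⟨A, hA, B, hB, hd, hAc, hBc, hma⟩ := exists_pair m (by omega) S
      (fun a ha b hb c hc => hgp a (hS'.1 ha) b (hS'.1 hb) c (hS'.1 hc)) hS'.2
    rw [Finset.mem_biUnion]
    refine ⟨(A, B), ?_, ?_⟩
    · rw [hQ, Finset.mem_filter, Finset.mem_product, Finset.mem_powerset, Finset.mem_powerset]
      exact ⟨⟨hA.trans hS'.1, hB.trans hS'.1⟩, hA.trans hS'.1, hB.trans hS'.1, hd, hAc, hBc, hma⟩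
    · rw [Finset.mem_filter]
      exact ⟨hS, Finset.union_subset hA hB⟩
  have hle : n.choose N ≤ Q.card * (n - 2 * m).choose (N - 2 * m) := by
    rw [← hn, ← Finset.card_powersetCard]
    refine (Finset.card_le_card hcover).trans ?_
    refine Finset.card_biUnion_le_card_mul _ _ _ ?_
    intro AB hAB
    rw [hQ, Finset.mem_filter] at hAB
    obtain ⟨-, hA, hB, hd, hAc, hBc, -⟩ := hAB
    have hUc : (AB.1 ∪ AB.2).card = 2 * m := by
      rw [Finset.card_union_of_disjoint hd]; omega
    have hUP : AB.1 ∪ AB.2 ⊆ P := Finset.union_subset hA hB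
    have hPU : (P \ (AB.1 ∪ AB.2)).card = P.card - 2 * m := by
      rw [Finset.card_sdiff_of_subset hUP, hUc]
    rw [← hPU, ← Finset.card_powersetCard]
    apply Finset.card_le_card_of_injOn (fun S => S \ (AB.1 ∪ AB.2))
    · intro S hS
      have hS := Finset.mem_filter.mp hS
      have hS' := Finset.mem_powersetCard.mp hS.1
      rw [Finset.mem_coe, Finset.mem_powersetCard]
      refine ⟨Finset.sdiff_subset_sdiff hS'.1 le_rfl, ?_⟩
      rw [Finset.card_sdiff_of_subset hS.2, hUc, hS'.2]
    · intro S hS S' hS' he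
      have hS := (Finset.mem_filter.mp hS).2
      have hS' := (Finset.mem_filter.mp hS').2
      simp only at he
      rw [← Finset.sdiff_union_of_subset hS, ← Finset.sdiff_union_of_subset hS', he]
  have hmul := Nat.choose_mul (n := n) (k := N) (s := 2 * m) hmN
  have hpos : 0 < (n - 2 * m).choose (N - 2 * m) := Nat.choose_pos (by omega)
  have hpos2 : 0 < N.choose (2 * m) := Nat.choose_pos hmN
  have hfinal : n.choose (2 * m) ≤ Q.card * N.choose (2 * m) := by
    apply Nat.le_of_mul_le_mul_right _ hpos
    rw [← hmul]
    calc n.choose N * N.choose (2 * m) ≤ (Q.card * (n - 2 * m).choose (N - 2 * m)) * N.choose (2 * m) :=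
          Nat.mul_le_mul_right _ hle
      _ = _ := by ring
  rw [div_le_iff₀ (by exact_mod_cast hpos2)]
  exact_mod_cast hfinal
end
end

section
/- Let k ≥ 1 be an integer and let n > 0 be a real number. Let α₁ ≤ α₂ ≤ … ≤ α_{10k} and β₁ ≤ β₂ ≤ … ≤ β_{10k} be nonnegative real numbers such that the total sum Σ_{i=1}^{10k} (α_i + β_i) ≤ n and such that Π_{i=1}^{10k} α_i β_i ≥ n^{20k} / (430k)^{47k}. Then there exists an index i with 1 ≤ i ≤ 9k such that α_i ≥ n/(1320k)⁴ and β_i ≥ n/(1320k)⁴. -/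
lemma prod_w (k : ℕ) (T c : ℝ) :
    ∏ i : Fin (10 * k), (if (i : ℕ) < 9 * k then T else c) = T ^ (9 * k) * c ^ k := by
  rw [Fin.prod_univ_eq_prod_range (fun j => if j < 9 * k then T else c) (10 * k),
    show 10 * k = 9 * k + k by ring, Finset.prod_range_add]
  congr 1
  · rw [Finset.prod_congr rfl (g := fun _ => T)]
    · simp
    · intro x hx
      simp [Finset.mem_range.mp hx]
  · simp

lemma sum_v (k : ℕ) :
    ∑ i : Fin (10 * k), (if (i : ℕ) < 9 * k then (0 : ℝ) else 1) = k := by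
  rw [Fin.sum_univ_eq_sum_range (fun j => if j < 9 * k then (0 : ℝ) else 1) (10 * k),
    show 10 * k = 9 * k + k by ring, Finset.sum_range_add]
  rw [Finset.sum_congr rfl (g := fun _ => (0 : ℝ))]
  · simp
  · intro x hx
    simp [Finset.mem_range.mp hx]

lemma le_c_exp (c x : ℝ) (hc : 0 < c) : x ≤ c * Real.exp (x / c - 1) := by
  have h := Real.add_one_le_exp (x / c - 1)
  have h2 : c * (x / c) ≤ c * Real.exp (x / c - 1) :=
    mul_le_mul_of_nonneg_left (by linarith) hc.le
  rwa [mul_div_cancel₀ _ hc.ne'] at h2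

lemma key (k : ℕ) (hk : 1 ≤ k) (n : ℝ) (hn : 0 < n)
    (α β : Fin (10 * k) → ℝ)
    (hα0 : ∀ i, 0 ≤ α i) (hβ0 : ∀ i, 0 ≤ β i)
    (hsum : ∑ i, (α i + β i) ≤ n)
    (hT : ∀ i : Fin (10 * k), (i : ℕ) < 9 * k → α i ≤ n / (1320 * (k : ℝ)) ^ 4) :
    ∏ i, α i * β i < n ^ (20 * k) / (430 * (k : ℝ)) ^ (47 * k) := by
  have hk0 : (0 : ℝ) < k := by exact_mod_cast hk
  set T := n / (1320 * (k : ℝ)) ^ 4 with hTdef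
  have hTpos : 0 < T := by positivity
  set c := n / (11 * (k : ℝ)) with hcdef
  have hc : 0 < c := by positivity
  have hnc : n / c = 11 * k := by rw [hcdef]; field_simp
  have h1 : ∏ i, α i * β i ≤ ∏ i : Fin (10 * k), (((if (i : ℕ) < 9 * k then T else c) * c) *
      Real.exp ((α i + β i) / c - (if (i : ℕ) < 9 * k then (0 : ℝ) else 1) - 1)) := by
    apply Finset.prod_le_prod
    · intro i _
      exact mul_nonneg (hα0 i) (hβ0 i)
    · intro i _
      have ha : α i ≤ (if (i : ℕ) < 9 * k then T else c) *
          Real.exp (α i / c - (if (i : ℕ) < 9 * k then (0 : ℝ) else 1)) := by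
        split_ifs with h
        · have h3 : 1 ≤ Real.exp (α i / c - 0) :=
            Real.one_le_exp (by have := div_nonneg (hα0 i) hc.le; linarith)
          nlinarith [hT i h]
        · exact le_c_exp c _ hc
      have hb := le_c_exp c (β i) hc
      calc α i * β i ≤ _ := mul_le_mul ha hb (hβ0 i) ((hα0 i).trans ha)
        _ = _ := by
          rw [mul_mul_mul_comm, ← Real.exp_add]
          congr 2
          ring
  have h2 : ∏ i : Fin (10 * k), (((if (i : ℕ) < 9 * k then T else c) * c) *
      Real.exp ((α i + β i) / c - (if (i : ℕ) < 9 * k then (0 : ℝ) else 1) - 1)) ≤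
      T ^ (9 * k) * c ^ (11 * k) := by
    rw [Finset.prod_mul_distrib, Finset.prod_mul_distrib, prod_w, ← Real.exp_sum,
      Finset.sum_sub_distrib, Finset.sum_sub_distrib, sum_v, ← Finset.sum_div]
    have h3 : (∑ i, (α i + β i)) / c ≤ 11 * k := by
      rw [← hnc]; gcongr
    have h4 : Real.exp ((∑ i, (α i + β i)) / c - k - ∑ i : Fin (10 * k), (1 : ℝ)) ≤ 1 := by
      rw [Real.exp_le_one_iff]
      simp
      linarith
    have h5 : T ^ (9 * k) * c ^ k * ∏ i : Fin (10 * k), c = T ^ (9 * k) * c ^ (11 * k) := by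
      simp
      rw [show 11 * k = k + 10 * k by ring, pow_add]
      ring
    rw [h5]
    exact mul_le_of_le_one_right (by positivity) h4
  refine lt_of_le_of_lt (h1.trans h2) ?_
  have h6 : T ^ (9 * k) * c ^ (11 * k) =
      n ^ (20 * k) / ((1320 ^ 36 * 11 ^ 11) * (k : ℝ) ^ 47) ^ k := by
    have e1 : T ^ (9 * k) * c ^ (11 * k) = (T ^ 9 * c ^ 11) ^ k := by
      rw [mul_pow, ← pow_mul, ← pow_mul]
    rw [e1, pow_mul, ← div_pow]
    congr 1
    rw [hTdef, hcdef]
    field_simp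
  rw [h6, pow_mul (430 * (k : ℝ))]
  apply div_lt_div_of_pos_left (by positivity) (by positivity)
  apply pow_lt_pow_left₀ _ (by positivity) (by omega)
  rw [mul_pow]
  apply mul_lt_mul_of_pos_right _ (by positivity)
  norm_num

/-- The key numerical claim (Claim 2.3) from the proof of the fractional mutually
avoiding sets theorem. -/
theorem numerical_claim (k : ℕ) (hk : 1 ≤ k) (n : ℝ) (hn : 0 < n)
    (α β : Fin (10 * k) → ℝ)
    (hα0 : ∀ i, 0 ≤ α i) (hβ0 : ∀ i, 0 ≤ β i)
    (hαmono : Monotone α) (hβmono : Monotone β)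
    (hsum : ∑ i, (α i + β i) ≤ n)
    (hprod : n ^ (20 * k) / (430 * (k : ℝ)) ^ (47 * k) ≤ ∏ i, α i * β i) :
    ∃ i : Fin (10 * k), (i : ℕ) < 9 * k ∧
      n / (1320 * (k : ℝ)) ^ 4 ≤ α i ∧ n / (1320 * (k : ℝ)) ^ 4 ≤ β i := by
  by_contra hcon
  push Not at hcon
  have hlt : 9 * k - 1 < 10 * k := by omega
  set m : Fin (10 * k) := ⟨9 * k - 1, hlt⟩ with hm
  have hle : ∀ i : Fin (10 * k), (i : ℕ) < 9 * k → i ≤ m := by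
    intro i hi
    rw [Fin.le_def]
    simp only [hm]
    omega
  have hm9 : (m : ℕ) < 9 * k := by
    simp only [hm]
    omega
  by_cases ha : n / (1320 * (k : ℝ)) ^ 4 ≤ α m
  · have hb := hcon m hm9 ha
    have := key k hk n hn β α hβ0 hα0 (by simpa only [add_comm] using hsum)
      (fun i hi => (hβmono (hle i hi)).trans hb.le)
    simp only [mul_comm (β _)] at this
    linarith
  · have := key k hk n hn α β hα0 hβ0 hsum
      (fun i hi => (hαmono (hle i hi)).trans (not_le.mp ha).le)
    linarith
end
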